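/- arXiv:1308.2499 — 4 statements merged into one kernel-verified Lean document; each statement's English description precedes it below -/
import Mathlib

section
/- Let p ∈ (7/3, 8/3). Then for all f, g ∈ W^{3p/2−2,2}(ℝ/ℤ,ℝⁿ) one has Q^{(p)}(f,g) = Σ_{k∈ℤ} ρ_k ⟨f̂_k, ĝ_k⟩_{ℂⁿ}, where ρ_k := ∬_D |(e^{2πikw}−1)/w − (e^{2πikv}−1)/v|² / (|v|^{p−2} |w|^{p−2} |v−w|^p) dw dv; moreover ρ_k / |k|^{3p−4} converges, as |k| → ∞, to the finite positive constant c := ∬_{(−∞,0)×(0,∞)} |(e^{2πiw}−1)/w − (e^{2πiv}−1)/v|² / (|v|^{p−2} |w|^{p−2} |v−w|^p) dw dv, so that ρ_k = c|k|^{3p−4} + o(|k|^{3p−4}). -/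
open MeasureTheory Set Filter Topology
open scoped ENNReal

noncomputable section

/-- The range of integration `D ⊆ (-1/2,0) × (0,1/2)` given by
`w ≤ 1 + 2v` and `v ≥ -1 + 2w`. -/
def domainD : Set (ℝ × ℝ) :=
  {x | x.1 ∈ Set.Ioo (-(1/2) : ℝ) 0 ∧ x.2 ∈ Set.Ioo (0 : ℝ) (1/2) ∧
    x.2 ≤ 1 + 2 * x.1 ∧ -1 + 2 * x.2 ≤ x.1}

/-- The `k`-th Fourier coefficient `f̂_k ∈ ℂⁿ` of a (componentwise real)
`1`-periodic function. -/
def fourierCoef {n : ℕ} (f : ℝ → EuclideanSpace ℝ (Fin n)) (k : ℤ) :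
    EuclideanSpace ℂ (Fin n) :=
  (WithLp.equiv 2 (Fin n → ℂ)).symm fun j =>
    ∫ x in Ico (0:ℝ) 1, (f x j : ℂ) *
      Complex.exp (-(((2 * Real.pi * (k : ℝ) * x : ℝ) : ℂ) * Complex.I))

/-- The bilinear form `Q^{(p)}`. -/
def Qform {n : ℕ} (p : ℝ) (f g : ℝ → EuclideanSpace ℝ (Fin n)) : ℝ :=
  ∫ u in Ico (0:ℝ) 1, ∫ x in domainD,
    (inner ℝ (x.2⁻¹ • (f (u + x.2) - f u) - x.1⁻¹ • (f (u + x.1) - f u))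
           (x.2⁻¹ • (g (u + x.2) - g u) - x.1⁻¹ • (g (u + x.1) - g u)) : ℝ) /
      (|x.1 - x.2| ^ p * |x.1| ^ (p - 2) * |x.2| ^ (p - 2))

/-- The integrand of the Fourier multiplier `ρ_k`. -/
def rhoIntegrand (p : ℝ) (k : ℤ) (x : ℝ × ℝ) : ℝ :=
  ‖(Complex.exp (((2 * Real.pi * (k : ℝ) * x.2 : ℝ) : ℂ) * Complex.I) - 1) / (x.2 : ℂ)
    - (Complex.exp (((2 * Real.pi * (k : ℝ) * x.1 : ℝ) : ℂ) * Complex.I) - 1) / (x.1 : ℂ)‖ ^ 2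
    / (|x.1| ^ (p - 2) * |x.2| ^ (p - 2) * |x.1 - x.2| ^ p)

/-- The Fourier multiplier `ρ_k` of `Q^{(p)}`. -/
def rhoCoef (p : ℝ) (k : ℤ) : ℝ := ∫ x in domainD, rhoIntegrand p k x

/-- The limit constant `c`. -/
def climit (p : ℝ) : ℝ :=
  ∫ x in {y : ℝ × ℝ | y.1 < 0 ∧ 0 < y.2}, rhoIntegrand p 1 x

theorem rpow_mul_rpow_le_add_rpow {a b α β : ℝ} (ha : 0 < a) (hb : 0 < b)
    (hα : 0 ≤ α) (hβ : 0 ≤ β) : a ^ α * b ^ β ≤ (a + b) ^ (α + β) := by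
  rw [Real.rpow_add (by positivity)]
  gcongr <;> linarith

theorem div_weight_le {p a b α β θ s K : ℝ} (ha : 0 < a) (hb : 0 < b) (hK : 0 ≤ K)
    (hα : 0 ≤ α) (hβ : 0 ≤ β) (hp : α + β + θ = p) (hs : s ≤ K * (a + b) ^ θ) :
    s / (a ^ (p - 2) * b ^ (p - 2) * (a + b) ^ p)
      ≤ K * (a ^ (2 - p - α) * b ^ (2 - p - β)) := by
  have hab : 0 < a + b := by positivity
  have h := rpow_mul_rpow_le_add_rpow ha hb hα hβ
  rw [div_le_iff₀ (by positivity)]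
  calc s ≤ K * (a + b) ^ θ := hs
    _ = K * (a + b) ^ θ * ((a ^ (-α) * b ^ (-β)) * (a ^ α * b ^ β)) := by
        rw [show a ^ (-α) * b ^ (-β) * (a ^ α * b ^ β)
          = (a ^ (-α) * a ^ α) * (b ^ (-β) * b ^ β) by ring,
          ← Real.rpow_add ha, ← Real.rpow_add hb]
        simp
    _ ≤ K * (a + b) ^ θ * ((a ^ (-α) * b ^ (-β)) * (a + b) ^ (α + β)) := by gcongr
    _ = K * ((a ^ (2 - p - α) * b ^ (2 - p - β))) *
          (a ^ (p - 2) * b ^ (p - 2) * (a + b) ^ p) := by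
        rw [← hp, show K * (a + b) ^ θ * (a ^ (-α) * b ^ (-β) * (a + b) ^ (α + β))
          = K * (a ^ (-α) * b ^ (-β)) * ((a + b) ^ (α + β) * (a + b) ^ θ) by ring,
          ← Real.rpow_add hab,
          show -α = (2 - (α + β + θ) - α) + (α + β + θ - 2) by ring,
          show -β = (2 - (α + β + θ) - β) + (α + β + θ - 2) by ring,
          Real.rpow_add ha, Real.rpow_add hb]
        ring_nf

/-- The one-variable majorant: `C · profile p |v| · profile p |w|` dominates the integrand
of `c`. -/
def profile (p a : ℝ) : ℝ := if a ≤ 1 then a ^ (3 - 3 * p / 2) else a ^ (2 - 3 * p / 2)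

theorem div_weight_le_profile {p a b s K : ℝ} (hp : 2 ≤ p) (ha : 0 < a) (hb : 0 < b)
    (hK : 0 ≤ K) (hs : s ≤ K) (hs' : s ≤ K * (a + b) ^ 2) :
    s / (a ^ (p - 2) * b ^ (p - 2) * (a + b) ^ p) ≤ K * (profile p a * profile p b) := by
  have h0 : s ≤ K * (a + b) ^ (0 : ℝ) := by simpa using hs
  have h2 : s ≤ K * (a + b) ^ (2 : ℝ) := by exact_mod_cast hs'
  unfold profile
  split_ifs with h₁ h₃ h₃
  · refine (div_weight_le (α := (p - 2) / 2) (β := (p - 2) / 2) ha hb hK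
      (by linarith) (by linarith) (by ring) h2).trans_eq ?_
    ring_nf
  · refine (div_weight_le (α := (p - 2) / 2) (β := (p + 2) / 2) ha hb hK
      (by linarith) (by linarith) (by ring) h0).trans ?_
    refine mul_le_mul_of_nonneg_left (mul_le_mul ?_ ?_ (by positivity) (by positivity)) hK
    · exact Real.rpow_le_rpow_of_exponent_ge ha h₁ (by linarith)
    · exact Real.rpow_le_rpow_of_exponent_le (not_le.1 h₃).le (by linarith)
  · refine (div_weight_le (α := (p + 2) / 2) (β := (p - 2) / 2) ha hb hK
      (by linarith) (by linarith) (by ring) h0).trans ?_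
    refine mul_le_mul_of_nonneg_left (mul_le_mul ?_ ?_ (by positivity) (by positivity)) hK
    · exact Real.rpow_le_rpow_of_exponent_le (not_le.1 h₁).le (by linarith)
    · exact Real.rpow_le_rpow_of_exponent_ge hb h₃ (by linarith)
  · refine (div_weight_le (α := p / 2) (β := p / 2) ha hb hK
      (by linarith) (by linarith) (by ring) h0).trans_eq ?_
    ring_nf

theorem integrableOn_profile {p : ℝ} (hp : 2 < p) (hp' : p < 8 / 3) :
    IntegrableOn (profile p) (Ioi 0) := by
  rw [← Ioc_union_Ioi_eq_Ioi (zero_le_one' ℝ)]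
  refine IntegrableOn.union ?_ ?_
  · refine IntegrableOn.congr_fun (f := fun a => a ^ (3 - 3 * p / 2)) ?_ ?_ measurableSet_Ioc
    · rw [← intervalIntegrable_iff_integrableOn_Ioc_of_le zero_le_one]
      exact intervalIntegral.intervalIntegrable_rpow' (by linarith)
    · intro a ha
      simp [profile, ha.2]
  · refine IntegrableOn.congr_fun (f := fun a => a ^ (2 - 3 * p / 2)) ?_ ?_ measurableSet_Ioi
    · exact integrableOn_Ioi_rpow_of_lt (by linarith) one_pos
    · intro a ha
      simp [profile, not_le.2 (mem_Ioi.1 ha)]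

/-- The Fourier symbol of the difference of difference quotients. -/
def symbol (k : ℤ) (x : ℝ × ℝ) : ℂ :=
  (Complex.exp (((2 * Real.pi * (k : ℝ) * x.2 : ℝ) : ℂ) * Complex.I) - 1) / (x.2 : ℂ)
    - (Complex.exp (((2 * Real.pi * (k : ℝ) * x.1 : ℝ) : ℂ) * Complex.I) - 1) / (x.1 : ℂ)

/-- The singular weight in the denominator of the integrands. -/
def weight (p : ℝ) (x : ℝ × ℝ) : ℝ := |x.1| ^ (p - 2) * |x.2| ^ (p - 2) * |x.1 - x.2| ^ p

theorem rhoIntegrand_eq (p : ℝ) (k : ℤ) (x : ℝ × ℝ) :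
    rhoIntegrand p k x = ‖symbol k x‖ ^ 2 / weight p x := rfl

theorem weight_nonneg (p : ℝ) (x : ℝ × ℝ) : 0 ≤ weight p x := by
  unfold weight; positivity

theorem rhoIntegrand_nonneg (p : ℝ) (k : ℤ) (x : ℝ × ℝ) : 0 ≤ rhoIntegrand p k x :=
  div_nonneg (by positivity) (weight_nonneg p x)

theorem measurable_symbol (k : ℤ) : Measurable (symbol k) := by
  unfold symbol; fun_prop

theorem measurable_weight (p : ℝ) : Measurable (weight p) := by
  unfold weight; fun_prop

theorem measurable_rhoIntegrand (p : ℝ) (k : ℤ) : Measurable (rhoIntegrand p k) :=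
  ((measurable_symbol k).norm.pow_const 2).div (measurable_weight p)

theorem norm_exp_sub_one_div_le (t : ℝ) :
    ‖(Complex.exp (((2 * Real.pi * t : ℝ) : ℂ) * Complex.I) - 1) / (t : ℂ)‖
      ≤ 2 * Real.pi := by
  have h := Real.norm_exp_I_mul_ofReal_sub_one_le (x := 2 * Real.pi * t)
  rw [mul_comm Complex.I] at h
  rw [norm_div, Complex.norm_real]
  refine div_le_of_le_mul₀ (norm_nonneg _) (by positivity) (h.trans_eq ?_)
  rw [norm_mul, Real.norm_of_nonneg (by positivity : 0 ≤ 2 * Real.pi)]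

theorem norm_exp_sub_one_div_sub_le {t : ℝ} (ht : t ≠ 0) :
    ‖(Complex.exp (((2 * Real.pi * t : ℝ) : ℂ) * Complex.I) - 1) / (t : ℂ)
      - 2 * Real.pi * Complex.I‖ ≤ 8 * Real.pi ^ 2 * |t| := by
  have hpi := Real.pi_pos
  have hn : ‖(((2 * Real.pi * t : ℝ) : ℂ) * Complex.I)‖ = 2 * Real.pi * |t| := by
    rw [norm_mul, Complex.norm_I, Complex.norm_real, mul_one, norm_mul,
      Real.norm_of_nonneg (by positivity : 0 ≤ 2 * Real.pi), Real.norm_eq_abs]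
  by_cases h : 2 * Real.pi * |t| ≤ 1
  · have h1 := Complex.norm_exp_sub_one_sub_id_le (hn.trans_le h)
    have ht' : (t : ℂ) ≠ 0 := by exact_mod_cast ht
    have : (Complex.exp (((2 * Real.pi * t : ℝ) : ℂ) * Complex.I) - 1) / (t : ℂ)
      - 2 * Real.pi * Complex.I = (Complex.exp (((2 * Real.pi * t : ℝ) : ℂ) * Complex.I) - 1
        - (((2 * Real.pi * t : ℝ) : ℂ) * Complex.I)) / (t : ℂ) := by
      push_cast; field_simp
    rw [this, norm_div, Complex.norm_real, Real.norm_eq_abs, div_le_iff₀ (by positivity)]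
    rw [hn] at h1
    refine h1.trans ?_
    have : 0 ≤ Real.pi ^ 2 * |t| ^ 2 := by positivity
    nlinarith
  · have h1 := norm_exp_sub_one_div_le t
    have h2 : ‖(2 * Real.pi * Complex.I : ℂ)‖ = 2 * Real.pi := by
      simp [abs_of_pos hpi]
    refine (norm_sub_le _ _).trans ?_
    rw [h2]
    nlinarith

theorem norm_symbol_one_le (y : ℝ × ℝ) : ‖symbol 1 y‖ ≤ 4 * Real.pi := by
  have h1 := norm_exp_sub_one_div_le y.1
  have h2 := norm_exp_sub_one_div_le y.2
  refine (norm_sub_le _ _).trans ?_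
  simp only [Int.cast_one, mul_one]
  linarith

theorem norm_symbol_one_le_add {y : ℝ × ℝ} (h1 : y.1 ≠ 0) (h2 : y.2 ≠ 0) :
    ‖symbol 1 y‖ ≤ 8 * Real.pi ^ 2 * (|y.1| + |y.2|) := by
  have h1 := norm_exp_sub_one_div_sub_le h1
  have h2 := norm_exp_sub_one_div_sub_le h2
  have := norm_sub_le_norm_sub_add_norm_sub
    ((Complex.exp (((2 * Real.pi * y.2 : ℝ) : ℂ) * Complex.I) - 1) / (y.2 : ℂ))
    (2 * Real.pi * Complex.I)
    ((Complex.exp (((2 * Real.pi * y.1 : ℝ) : ℂ) * Complex.I) - 1) / (y.1 : ℂ))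
  rw [norm_sub_rev (2 * Real.pi * Complex.I)] at this
  simp only [symbol, Int.cast_one, mul_one]
  linarith

theorem quadrant_eq_prod : {y : ℝ × ℝ | y.1 < 0 ∧ 0 < y.2} = Iio 0 ×ˢ Ioi 0 := by
  ext; simp

theorem rhoIntegrand_one_le {p : ℝ} (hp : 2 ≤ p) {y : ℝ × ℝ} (h1 : y.1 < 0) (h2 : 0 < y.2) :
    rhoIntegrand p 1 y
      ≤ (8 * Real.pi ^ 2) ^ 2 * (profile p (-y.1) * profile p y.2) := by
  have hb1 := norm_symbol_one_le y
  have hb2 := norm_symbol_one_le_add h1.ne h2.ne'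
  rw [abs_of_neg h1, abs_of_pos h2] at hb2
  have h3 : |y.1 - y.2| = -y.1 + y.2 := by rw [abs_of_neg (by linarith)]; ring
  rw [rhoIntegrand_eq, weight, abs_of_neg h1, abs_of_pos h2, h3]
  refine div_weight_le_profile hp (neg_pos.2 h1) h2 (by positivity) ?_ ?_
  · gcongr
    nlinarith [Real.pi_gt_three]
  · rw [← mul_pow]
    gcongr

theorem integrableOn_rhoIntegrand_one {p : ℝ} (hp : 2 < p) (hp' : p < 8 / 3) :
    IntegrableOn (rhoIntegrand p 1) {y : ℝ × ℝ | y.1 < 0 ∧ 0 < y.2} := by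
  have h2 := integrableOn_profile hp hp'
  have h1 : IntegrableOn (fun v => profile p (-v)) (Iio 0) := by
    have := h2.comp_neg
    simpa using this
  have h := (Integrable.mul_prod h1 h2).const_mul ((8 * Real.pi ^ 2) ^ 2)
  rw [Measure.prod_restrict, ← quadrant_eq_prod] at h
  refine Integrable.mono' h (measurable_rhoIntegrand p 1).aestronglyMeasurable ?_
  rw [quadrant_eq_prod]
  refine ae_restrict_of_forall_mem (measurableSet_Iio.prod measurableSet_Ioi) fun y hy => ?_
  rw [Real.norm_of_nonneg (rhoIntegrand_nonneg _ _ _)]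
  exact rhoIntegrand_one_le hp.le hy.1 hy.2

section Scaling

open scoped Pointwise

theorem measurableSet_domainD : MeasurableSet domainD := by
  have : domainD = (Ioo (-(1/2) : ℝ) 0 ×ˢ Ioo (0 : ℝ) (1/2)) ∩
      ({x : ℝ × ℝ | x.2 ≤ 1 + 2 * x.1} ∩ {x : ℝ × ℝ | -1 + 2 * x.2 ≤ x.1}) := by
    ext x
    simp [domainD, and_assoc]
  rw [this]
  refine (measurableSet_Ioo.prod measurableSet_Ioo).inter
    ((measurableSet_le ?_ ?_).inter (measurableSet_le ?_ ?_)) <;> fun_prop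

theorem symbol_neg (k : ℤ) (x : ℝ × ℝ) :
    symbol (-k) x = (starRingEnd ℂ) (symbol k x) := by
  simp only [symbol, map_sub, map_div₀, Complex.conj_ofReal, map_one, ← Complex.exp_conj,
    map_mul, Complex.conj_I]
  push_cast
  ring_nf

theorem norm_symbol (k : ℤ) (x : ℝ × ℝ) :
    ‖symbol k x‖ = |(k : ℝ)| * ‖symbol 1 (|(k : ℝ)| • x)‖ := by
  have key : ∀ m : ℤ, 0 ≤ m → ‖symbol m x‖ = |(m : ℝ)| * ‖symbol 1 (|(m : ℝ)| • x)‖ := by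
    intro m hm
    have hm' : (0 : ℝ) ≤ m := by exact_mod_cast hm
    rcases hm'.eq_or_lt with h | h
    · simp [symbol, ← h]
    have hne : (m : ℂ) ≠ 0 := by exact_mod_cast h.ne'
    have : symbol m x = (m : ℂ) * symbol 1 ((m : ℝ) • x) := by
      simp only [symbol, Prod.smul_fst, Prod.smul_snd, smul_eq_mul]
      push_cast
      rw [mul_sub, ← mul_div_assoc, ← mul_div_assoc, mul_div_mul_left _ _ hne,
        mul_div_mul_left _ _ hne]
      ring_nf
    rw [abs_of_pos h, this, norm_mul]
    simp [abs_of_pos h]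
  rcases le_total 0 k with h | h
  · exact key k h
  · have := key (-k) (by lia)
    rw [symbol_neg, RCLike.norm_conj] at this
    simpa using this

theorem weight_smul (p : ℝ) {r : ℝ} (hr : 0 < r) (x : ℝ × ℝ) :
    weight p (r • x) = r ^ (3 * p - 4) * weight p x := by
  simp only [weight, Prod.smul_fst, Prod.smul_snd, smul_eq_mul, ← mul_sub, abs_mul,
    abs_of_pos hr]
  rw [Real.mul_rpow hr.le (abs_nonneg _), Real.mul_rpow hr.le (abs_nonneg _),
    Real.mul_rpow hr.le (abs_nonneg _),
    show 3 * p - 4 = (p - 2) + (p - 2) + p by ring, Real.rpow_add hr, Real.rpow_add hr]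
  ring

theorem rhoIntegrand_scaling (p : ℝ) {k : ℤ} (hk : k ≠ 0) (x : ℝ × ℝ) :
    rhoIntegrand p k x =
      |(k : ℝ)| ^ (3 * p - 4) * (|(k : ℝ)| ^ 2 * rhoIntegrand p 1 (|(k : ℝ)| • x)) := by
  have hr : 0 < |(k : ℝ)| := abs_pos.2 (by exact_mod_cast hk)
  rw [rhoIntegrand_eq, rhoIntegrand_eq, weight_smul p hr, norm_symbol]
  have := (Real.rpow_pos_of_pos hr (3 * p - 4)).ne'
  field_simp

theorem smul_domainD_subset {r : ℝ} (hr : 0 < r) :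
    r • domainD ⊆ {y : ℝ × ℝ | y.1 < 0 ∧ 0 < y.2} := by
  rintro _ ⟨x, hx, rfl⟩
  exact ⟨mul_neg_of_pos_of_neg hr hx.1.2, mul_pos hr hx.2.1.1⟩

theorem measurableSet_smul_domainD (r : ℝ) : MeasurableSet (r • domainD) :=
  measurableSet_domainD.const_smul₀ r

theorem rhoCoef_eq (p : ℝ) {k : ℤ} (hk : k ≠ 0) :
    rhoCoef p k = |(k : ℝ)| ^ (3 * p - 4) *
      ∫ y in |(k : ℝ)| • domainD, rhoIntegrand p 1 y := by
  have hr : 0 < |(k : ℝ)| := abs_pos.2 (by exact_mod_cast hk)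
  have h := Measure.setIntegral_comp_smul_of_pos volume (rhoIntegrand p 1) domainD hr
  simp only [rhoCoef, rhoIntegrand_scaling p hk, integral_const_mul]
  rw [h]
  simp only [Module.finrank_prod, Module.finrank_self, smul_eq_mul]
  field_simp

theorem rhoIntegrand_zero (p : ℝ) (x : ℝ × ℝ) : rhoIntegrand p 0 x = 0 := by
  simp [rhoIntegrand]

theorem integrableOn_rhoIntegrand {p : ℝ} (hp : 2 < p) (hp' : p < 8 / 3) (k : ℤ) :
    IntegrableOn (rhoIntegrand p k) domainD := by
  rcases eq_or_ne k 0 with rfl | hk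
  · simp [funext (rhoIntegrand_zero p)]
  have hr : 0 < |(k : ℝ)| := abs_pos.2 (by exact_mod_cast hk)
  rw [funext (rhoIntegrand_scaling p hk)]
  refine (Integrable.const_mul ?_ _).const_mul _
  have h := (integrableOn_rhoIntegrand_one hp hp').mono_set (smul_domainD_subset hr)
  rw [← integrable_indicator_iff (measurableSet_smul_domainD _),
    ← integrable_comp_smul_iff volume _ hr.ne'] at h
  refine ((integrable_indicator_iff measurableSet_domainD).1 (h.congr ?_))
  refine Eventually.of_forall fun x => ?_
  by_cases hx : x ∈ domainD
  · simp [hx, smul_mem_smul_set_iff₀ hr.ne']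
  · simp [hx, smul_mem_smul_set_iff₀ hr.ne']

theorem setIntegral_smul_domainD_le {p : ℝ} (hp : 2 < p) (hp' : p < 8 / 3) {r : ℝ}
    (hr : 0 < r) : ∫ y in r • domainD, rhoIntegrand p 1 y ≤ climit p :=
  setIntegral_mono_set (integrableOn_rhoIntegrand_one hp hp')
    (Eventually.of_forall fun _ => rhoIntegrand_nonneg _ _ _)
    (smul_domainD_subset hr).eventuallyLE

theorem climit_nonneg (p : ℝ) : 0 ≤ climit p :=
  integral_nonneg fun _ => rhoIntegrand_nonneg _ _ _

theorem rhoCoef_nonneg (p : ℝ) (k : ℤ) : 0 ≤ rhoCoef p k :=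
  integral_nonneg fun _ => rhoIntegrand_nonneg _ _ _

theorem rhoCoef_le {p : ℝ} (hp : 2 < p) (hp' : p < 8 / 3) (k : ℤ) :
    rhoCoef p k ≤ climit p * (1 + (k : ℝ) ^ 2) ^ (3 * p / 2 - 2) := by
  rcases eq_or_ne k 0 with rfl | hk
  · simp [rhoCoef, rhoIntegrand_zero, climit_nonneg]
  have hr : 0 < |(k : ℝ)| := abs_pos.2 (by exact_mod_cast hk)
  rw [rhoCoef_eq p hk, mul_comm]
  have h : |(k : ℝ)| ^ (3 * p - 4) ≤ (1 + (k : ℝ) ^ 2) ^ (3 * p / 2 - 2) := by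
    rw [show 3 * p - 4 = (2 : ℕ) * (3 * p / 2 - 2) by push_cast; ring,
      Real.rpow_natCast_mul hr.le, sq_abs]
    refine Real.rpow_le_rpow (by positivity) (by linarith) (by linarith)
  exact mul_le_mul (setIntegral_smul_domainD_le hp hp' hr) h (by positivity) (climit_nonneg p)

theorem climit_pos {p : ℝ} (hp : 2 < p) (hp' : p < 8 / 3) : 0 < climit p := by
  unfold climit
  rw [setIntegral_pos_iff_support_of_nonneg_ae
    (Eventually.of_forall fun _ => rhoIntegrand_nonneg _ _ _)
    (integrableOn_rhoIntegrand_one hp hp')]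
  have hQ : IsOpen {y : ℝ × ℝ | y.1 < 0 ∧ 0 < y.2} := by
    rw [quadrant_eq_prod]
    exact isOpen_Iio.prod isOpen_Ioi
  have hc : ContinuousOn (symbol 1) {y : ℝ × ℝ | y.1 < 0 ∧ 0 < y.2} := by
    unfold symbol
    refine ContinuousOn.sub (ContinuousOn.div (by fun_prop) (by fun_prop) ?_)
      (ContinuousOn.div (by fun_prop) (by fun_prop) ?_)
    · intro y hy
      exact_mod_cast hy.2.ne'
    · intro y hy
      exact_mod_cast hy.1.ne
  have hU := hc.isOpen_inter_preimage hQ (isOpen_compl_singleton (x := (0 : ℂ)))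
  refine (hU.measure_pos volume ⟨((-(1/2) : ℝ), (1/2 : ℝ)), by norm_num, ?_⟩).trans_le
    (measure_mono ?_)
  · have e1 : ((2 * Real.pi * ((1 : ℤ) : ℝ) * (1/2) : ℝ) : ℂ) * Complex.I
        = Real.pi * Complex.I := by push_cast; ring
    have e2 : ((2 * Real.pi * ((1 : ℤ) : ℝ) * (-(1/2)) : ℝ) : ℂ) * Complex.I
        = -(Real.pi * Complex.I) := by push_cast; ring
    simp only [mem_preimage, mem_compl_iff, mem_singleton_iff, symbol]
    rw [e1, e2, Complex.exp_neg, Complex.exp_pi_mul_I]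
    norm_num
  · rintro y ⟨hy, hne⟩
    refine ⟨?_, hy⟩
    have h1 : 0 < |y.1| := abs_pos.2 hy.1.ne
    have h2 : 0 < |y.2| := abs_pos.2 hy.2.ne'
    have h3 : 0 < |y.1 - y.2| := abs_pos.2 (by linarith [hy.1, hy.2])
    have h4 : 0 < ‖symbol 1 y‖ := norm_pos_iff.2 hne
    rw [Function.mem_support, rhoIntegrand_eq, weight]
    positivity

theorem tendsto_setIntegral_smul_domainD {p : ℝ} (hp : 2 < p) (hp' : p < 8 / 3) :
    Tendsto (fun r : ℝ => ∫ y in r • domainD, rhoIntegrand p 1 y) atTop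
      (𝓝 (climit p)) := by
  have hQ : MeasurableSet {y : ℝ × ℝ | y.1 < 0 ∧ 0 < y.2} := by
    rw [quadrant_eq_prod]
    exact measurableSet_Iio.prod measurableSet_Ioi
  have h : Tendsto (fun r : ℝ => ∫ y in {y : ℝ × ℝ | y.1 < 0 ∧ 0 < y.2},
      (r • domainD).indicator (rhoIntegrand p 1) y) atTop (𝓝 (climit p)) := by
    refine tendsto_integral_filter_of_dominated_convergence (rhoIntegrand p 1) ?_ ?_
      (integrableOn_rhoIntegrand_one hp hp') ?_
    · filter_upwards [eventually_gt_atTop 0] with r hr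
      exact ((measurable_rhoIntegrand p 1).indicator
        (measurableSet_smul_domainD _)).aestronglyMeasurable
    · refine Eventually.of_forall fun r => Eventually.of_forall fun y => ?_
      refine (norm_indicator_le_norm_self _ _).trans_eq ?_
      exact Real.norm_of_nonneg (rhoIntegrand_nonneg _ _ _)
    · refine ae_restrict_of_forall_mem hQ fun y hy => ?_
      refine tendsto_const_nhds.congr' ?_
      have ha := hy.1
      have hb := hy.2
      filter_upwards [eventually_gt_atTop (4 * (y.2 - y.1))] with r hr
      have hr0 : 0 < r := by linarith
      rw [indicator_of_mem]
      rw [mem_smul_set_iff_inv_smul_mem₀ hr0.ne']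
      have h1 : r * (r⁻¹ * y.1) = y.1 := by field_simp
      have h2 : r * (r⁻¹ * y.2) = y.2 := by field_simp
      have h3 : r⁻¹ * y.1 < 0 := mul_neg_of_pos_of_neg (inv_pos.2 hr0) ha
      have h4 : 0 < r⁻¹ * y.2 := mul_pos (inv_pos.2 hr0) hb
      have h5 : r⁻¹ * y.2 - r⁻¹ * y.1 < 1 / 4 := by
        by_contra! hcon
        nlinarith
      simp only [domainD, mem_ofPred_eq, mem_Ioo, Prod.smul_fst, Prod.smul_snd, smul_eq_mul]
      refine ⟨⟨?_, h3⟩, ⟨h4, ?_⟩, ?_, ?_⟩ <;> linarith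
  refine h.congr' ?_
  filter_upwards [eventually_gt_atTop 0] with r hr
  rw [setIntegral_indicator (measurableSet_smul_domainD _),
    inter_eq_right.2 (smul_domainD_subset hr)]

theorem tendsto_rhoCoef_div {p : ℝ} (hp : 2 < p) (hp' : p < 8 / 3) :
    Tendsto (fun k : ℤ => rhoCoef p k / |(k : ℝ)| ^ (3 * p - 4)) cofinite
      (𝓝 (climit p)) := by
  have habs : Tendsto (fun k : ℤ => |(k : ℝ)|) cofinite atTop := by
    rw [Int.cofinite_eq, tendsto_sup]
    exact ⟨tendsto_abs_atBot_atTop.comp (tendsto_intCast_atBot_iff.2 tendsto_id),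
      tendsto_abs_atTop_atTop.comp tendsto_intCast_atTop_atTop⟩
  refine ((tendsto_setIntegral_smul_domainD hp hp').comp habs).congr' ?_
  filter_upwards [eventually_cofinite_ne 0] with k hk
  have hr : 0 < |(k : ℝ)| := abs_pos.2 (by exact_mod_cast hk)
  rw [rhoCoef_eq p hk, Function.comp_apply, mul_div_cancel_left₀]
  exact (Real.rpow_pos_of_pos hr _).ne'

end Scaling

theorem UnitAddCircle.volume_eq_haarAddCircle :
    (volume : Measure UnitAddCircle) = AddCircle.haarAddCircle := by
  rw [AddCircle.volume_eq_smul_haarAddCircle, ENNReal.ofReal_one, one_smul]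

theorem hasSum_conj_fourierCoeff_mul {F G : UnitAddCircle → ℂ} (hF : MemLp F 2)
    (hG : MemLp G 2) :
    HasSum (fun k : ℤ => (starRingEnd ℂ) (fourierCoeff F k) * fourierCoeff G k)
      (∫ u, (starRingEnd ℂ) (F u) * G u) := by
  rw [UnitAddCircle.volume_eq_haarAddCircle] at *
  have h := fourierBasis.hasSum_inner_mul_inner (hF.toLp F) (hG.toLp G)
  convert! h using 1
  · ext k
    rw [← inner_conj_symm, ← fourierBasis.repr_apply_apply, ← fourierBasis.repr_apply_apply,
      fourierBasis_repr, fourierBasis_repr, fourierCoeff_congr_ae hF.coeFn_toLp,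
      fourierCoeff_congr_ae hG.coeFn_toLp]
  · rw [L2.inner_def]
    refine integral_congr_ae ?_
    filter_upwards [hF.coeFn_toLp, hG.coeFn_toLp] with u h1 h2
    rw [h1, h2, RCLike.inner_apply, mul_comm]

theorem hasSum_sq_norm_fourierCoeff {F : UnitAddCircle → ℂ} (hF : MemLp F 2) :
    HasSum (fun k : ℤ => ‖fourierCoeff F k‖ ^ 2) (∫ u, ‖F u‖ ^ 2) := by
  have h := hasSum_conj_fourierCoeff_mul hF hF
  simp only [RCLike.conj_mul] at h
  have h2 : ∫ u, ((‖F u‖ : ℂ)) ^ 2 = ((∫ u, ‖F u‖ ^ 2 : ℝ) : ℂ) := by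
    rw [← integral_complex_ofReal]
    push_cast
    rfl
  have h3 : HasSum (fun k : ℤ => ((‖fourierCoeff F k‖ : ℂ)) ^ 2)
      ((∫ u, ‖F u‖ ^ 2 : ℝ) : ℂ) := h2 ▸ h
  exact_mod_cast h3

theorem fourierCoeff_comp_add_right (A : UnitAddCircle → ℂ) (k : ℤ) (s : UnitAddCircle) :
    fourierCoeff (fun u => A (u + s)) k = fourier k s * fourierCoeff A k := by
  have h := integral_add_right_eq_self (μ := AddCircle.haarAddCircle)
    (fun u : UnitAddCircle => fourier k s * (fourier (-k) u • A u)) s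
  simp only [fourierCoeff]
  rw [← integral_const_mul, ← h]
  refine integral_congr_ae (Eventually.of_forall fun u => ?_)
  have h1 : fourier (-k) (u + s) = fourier (-k) u * fourier (-k) s := by
    simp only [fourier_apply, smul_add, AddCircle.toCircle_add, Circle.coe_mul]
  have h2 : fourier k s * fourier (-k) s = (1 : ℂ) := by
    rw [← fourier_add, add_neg_cancel, fourier_zero]
  simp only [smul_eq_mul, h1]
  linear_combination (-(fourier (-k) u) * A (u + s)) * h2

/-- The difference of the forward and the backward difference quotient at `u`, with steps
`w = x.2` and `v = x.1`. -/
def diffQuot (A : UnitAddCircle → ℂ) (x : ℝ × ℝ) (u : UnitAddCircle) : ℂ :=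
  (x.2 : ℂ)⁻¹ * (A (u + (x.2 : UnitAddCircle)) - A u)
    - (x.1 : ℂ)⁻¹ * (A (u + (x.1 : UnitAddCircle)) - A u)

theorem memLp_comp_add_right {A : UnitAddCircle → ℂ} (hA : MemLp A 2) (s : UnitAddCircle) :
    MemLp (fun u => A (u + s)) 2 :=
  hA.comp_measurePreserving (measurePreserving_add_right volume s)

theorem memLp_diffQuot {A : UnitAddCircle → ℂ} (hA : MemLp A 2) (x : ℝ × ℝ) :
    MemLp (diffQuot A x) 2 :=
  (((memLp_comp_add_right hA _).sub hA).const_mul _).sub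
    (((memLp_comp_add_right hA _).sub hA).const_mul _)

theorem fourierCoeff_sub {F G : UnitAddCircle → ℂ} (hF : MemLp F 2) (hG : MemLp G 2) (k : ℤ) :
    fourierCoeff (fun u => F u - G u) k = fourierCoeff F k - fourierCoeff G k := by
  rw [UnitAddCircle.volume_eq_haarAddCircle] at *
  have h := fourierCoeff.add (hF.integrable one_le_two) (hG.neg.integrable one_le_two)
  have h2 := fourierCoeff.const_mul G (-1) k
  simp only [neg_mul, one_mul] at h2
  rw [sub_eq_add_neg, ← h2]
  simpa [sub_eq_add_neg, Pi.add_def, Pi.neg_def] using congrFun h k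

theorem fourierCoeff_diffQuot {A : UnitAddCircle → ℂ} (hA : MemLp A 2) (x : ℝ × ℝ) (k : ℤ) :
    fourierCoeff (diffQuot A x) k = symbol k x * fourierCoeff A k := by
  have key : ∀ t : ℝ, fourierCoeff
      (fun u => (t : ℂ)⁻¹ * (A (u + (t : UnitAddCircle)) - A u)) k
      = (Complex.exp (((2 * Real.pi * (k : ℝ) * t : ℝ) : ℂ) * Complex.I) - 1) / (t : ℂ)
        * fourierCoeff A k := by
    intro t
    rw [fourierCoeff.const_mul, fourierCoeff_sub (memLp_comp_add_right hA _) hA,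
      fourierCoeff_comp_add_right, fourier_coe_apply]
    push_cast
    ring_nf
  have h := fourierCoeff_sub
    (((memLp_comp_add_right hA (x.2 : UnitAddCircle)).sub hA).const_mul (x.2 : ℂ)⁻¹)
    (((memLp_comp_add_right hA (x.1 : UnitAddCircle)).sub hA).const_mul (x.1 : ℂ)⁻¹) k
  simp only [Pi.sub_apply] at h
  unfold diffQuot
  rw [h, key, key, symbol]
  ring

theorem aestronglyMeasurable_diffQuot {A : UnitAddCircle → ℂ} (hA : MemLp A 2)
    (ν : Measure (ℝ × ℝ)) [SFinite ν] :
    AEStronglyMeasurable (fun z : UnitAddCircle × (ℝ × ℝ) => diffQuot A z.2 z.1)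
      ((volume : Measure UnitAddCircle).prod ν) := by
  have hm : Measurable (fun t : ℝ => (t : UnitAddCircle)) := AddCircle.measurable_mk'
  have key : ∀ φ : ℝ × ℝ → ℝ, Measurable φ →
      AEStronglyMeasurable (fun z : UnitAddCircle × (ℝ × ℝ) =>
        A (z.1 + (φ z.2 : UnitAddCircle))) ((volume : Measure UnitAddCircle).prod ν) := by
    intro φ hφ
    refine hA.1.comp_quasiMeasurePreserving
      (f := fun z : UnitAddCircle × (ℝ × ℝ) => z.1 + (φ z.2 : UnitAddCircle)) ?_
    refine QuasiMeasurePreserving.prod_of_left ?_ ?_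
    · exact measurable_fst.add (hm.comp (hφ.comp measurable_snd))
    · exact Eventually.of_forall fun x =>
        (measurePreserving_add_right volume (φ x : UnitAddCircle)).quasiMeasurePreserving
  have h0 : AEStronglyMeasurable (fun z : UnitAddCircle × (ℝ × ℝ) => A z.1)
      ((volume : Measure UnitAddCircle).prod ν) :=
    hA.1.comp_quasiMeasurePreserving Measure.quasiMeasurePreserving_fst
  have hinv : ∀ φ : ℝ × ℝ → ℝ, Measurable φ →
      AEStronglyMeasurable (fun z : UnitAddCircle × (ℝ × ℝ) => ((φ z.2 : ℝ) : ℂ)⁻¹)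
        ((volume : Measure UnitAddCircle).prod ν) := fun φ hφ =>
    (Complex.measurable_ofReal.comp (hφ.comp measurable_snd)).inv.aestronglyMeasurable
  exact ((hinv _ measurable_snd).mul ((key _ measurable_snd).sub h0)).sub
    ((hinv _ measurable_fst).mul ((key _ measurable_fst).sub h0))

theorem summable_rhoCoef_mul {p : ℝ} (hp : 2 < p) (hp' : p < 8 / 3) {s : ℤ → ℝ}
    (hs : ∀ k, 0 ≤ s k)
    (h : Summable fun k : ℤ => (1 + (k : ℝ) ^ 2) ^ (3 * p / 2 - 2) * s k) :
    Summable fun k => rhoCoef p k * s k := by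
  refine Summable.of_nonneg_of_le (fun k => mul_nonneg (rhoCoef_nonneg p k) (hs k))
    (fun k => ?_) (h.mul_left (climit p))
  rw [← mul_assoc]
  exact mul_le_mul_of_nonneg_right (rhoCoef_le hp hp' k) (hs k)

theorem integrable_of_hasSum_of_nonneg {α ι : Type*} [MeasurableSpace α] [Countable ι]
    {μ : Measure α} {F : ι → α → ℝ} {S : α → ℝ} (hF : ∀ i, Integrable (F i) μ)
    (hF0 : ∀ i x, 0 ≤ F i x) (hsum : Summable fun i => ∫ x, F i x ∂μ)
    (hS : ∀ x, HasSum (fun i => F i x) (S x)) : Integrable S μ := by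
  have hm : AEStronglyMeasurable S μ :=
    aestronglyMeasurable_of_tendsto_ae atTop (f := fun (s : Finset ι) x => ∑ i ∈ s, F i x)
      (fun s => (integrable_finsetSum s fun i _ => hF i).1) (Eventually.of_forall hS)
  have hS0 : ∀ x, 0 ≤ S x := fun x => (hS x).nonneg fun i => hF0 i x
  refine ⟨hm, ?_⟩
  rw [hasFiniteIntegral_iff_ofReal (Eventually.of_forall hS0)]
  have h1 : ∀ x, ENNReal.ofReal (S x) = ∑' i, ENNReal.ofReal (F i x) := fun x => by
    rw [← (hS x).tsum_eq, ENNReal.ofReal_tsum_of_nonneg (fun i => hF0 i x) (hS x).summable]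
  simp only [h1]
  rw [lintegral_tsum fun i => (hF i).1.aemeasurable.ennreal_ofReal]
  simp only [← ofReal_integral_eq_lintegral_ofReal (hF _) (Eventually.of_forall (hF0 _))]
  rw [← ENNReal.ofReal_tsum_of_nonneg (fun i => integral_nonneg (hF0 i)) hsum]
  exact ENNReal.ofReal_lt_top

theorem aestronglyMeasurable_sq_norm_diffQuot (p : ℝ) {A : UnitAddCircle → ℂ}
    (hA : MemLp A 2) (ν : Measure (ℝ × ℝ)) [SFinite ν] :
    AEStronglyMeasurable
      (fun z : UnitAddCircle × (ℝ × ℝ) => ‖diffQuot A z.2 z.1‖ ^ 2 / weight p z.2)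
      ((volume : Measure UnitAddCircle).prod ν) := by
  have h1 := (aestronglyMeasurable_diffQuot hA ν).norm.aemeasurable.pow_const 2
  have h2 : Measurable fun z : UnitAddCircle × (ℝ × ℝ) => weight p z.2 :=
    (measurable_weight p).comp measurable_snd
  exact (h1.div h2.aemeasurable).aestronglyMeasurable

theorem hasSum_rhoIntegrand_mul (p : ℝ) {A : UnitAddCircle → ℂ} (hA : MemLp A 2)
    (x : ℝ × ℝ) :
    HasSum (fun k : ℤ => rhoIntegrand p k x * ‖fourierCoeff A k‖ ^ 2)
      (∫ u, ‖diffQuot A x u‖ ^ 2 / weight p x) := by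
  have h := (hasSum_sq_norm_fourierCoeff (memLp_diffQuot hA x)).div_const (weight p x)
  rw [← integral_div] at h
  refine h.congr_fun fun k => ?_
  rw [fourierCoeff_diffQuot hA, rhoIntegrand_eq, norm_mul]
  ring

theorem integrable_sq_norm_diffQuot {p : ℝ} (hp : 2 < p) (hp' : p < 8 / 3)
    {A : UnitAddCircle → ℂ} (hA : MemLp A 2)
    (hs : Summable fun k : ℤ => (1 + (k : ℝ) ^ 2) ^ (3 * p / 2 - 2) * ‖fourierCoeff A k‖ ^ 2) :
    Integrable (fun z : UnitAddCircle × (ℝ × ℝ) => ‖diffQuot A z.2 z.1‖ ^ 2 / weight p z.2)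
      ((volume : Measure UnitAddCircle).prod (volume.restrict domainD)) := by
  rw [integrable_prod_iff' (aestronglyMeasurable_sq_norm_diffQuot p hA _)]
  constructor
  · refine Eventually.of_forall fun x => ?_
    have h : Integrable fun u => ‖diffQuot A x u‖ ^ 2 := (memLp_diffQuot hA x).norm.integrable_sq
    simpa only using h.div_const (weight p x)
  · have hn : ∀ (x : ℝ × ℝ) (u : UnitAddCircle), ‖‖diffQuot A x u‖ ^ 2 / weight p x‖
        = ‖diffQuot A x u‖ ^ 2 / weight p x := fun x u =>
      Real.norm_of_nonneg (div_nonneg (sq_nonneg _) (weight_nonneg p x))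
    simp only [hn]
    refine integrable_of_hasSum_of_nonneg
      (fun k => (integrableOn_rhoIntegrand hp hp' k).mul_const (‖fourierCoeff A k‖ ^ 2))
      (fun k x => mul_nonneg (rhoIntegrand_nonneg _ _ _) (sq_nonneg _)) ?_
      (hasSum_rhoIntegrand_mul p hA)
    simp only [integral_mul_const]
    exact summable_rhoCoef_mul hp hp' (fun k => sq_nonneg ‖fourierCoeff A k‖) hs

/-- The sesquilinear density whose integral over `ℝ/ℤ × D` is diagonalised by the
Fourier basis. -/
def density (p : ℝ) (A B : UnitAddCircle → ℂ) (z : UnitAddCircle × (ℝ × ℝ)) : ℂ :=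
  (starRingEnd ℂ) (diffQuot A z.2 z.1) * diffQuot B z.2 z.1 / (weight p z.2 : ℂ)

theorem integrable_density {p : ℝ} (hp : 2 < p) (hp' : p < 8 / 3)
    {A B : UnitAddCircle → ℂ} (hA : MemLp A 2) (hB : MemLp B 2)
    (hsA : Summable fun k : ℤ => (1 + (k : ℝ) ^ 2) ^ (3 * p / 2 - 2) * ‖fourierCoeff A k‖ ^ 2)
    (hsB : Summable fun k : ℤ => (1 + (k : ℝ) ^ 2) ^ (3 * p / 2 - 2) * ‖fourierCoeff B k‖ ^ 2) :
    Integrable (density p A B)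
      ((volume : Measure UnitAddCircle).prod (volume.restrict domainD)) := by
  have h := (integrable_sq_norm_diffQuot hp hp' hA hsA).add
    (integrable_sq_norm_diffQuot hp hp' hB hsB)
  have hw : Measurable fun z : UnitAddCircle × (ℝ × ℝ) => (weight p z.2 : ℂ) :=
    Complex.measurable_ofReal.comp ((measurable_weight p).comp measurable_snd)
  refine Integrable.mono' h ?_ (Eventually.of_forall fun z => ?_)
  · have h1 := Complex.continuous_conj.comp_aestronglyMeasurable
      (aestronglyMeasurable_diffQuot hA (volume.restrict domainD))
    have h2 := aestronglyMeasurable_diffQuot hB (volume.restrict domainD)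
    exact ((h1.mul h2).aemeasurable.div hw.aemeasurable).aestronglyMeasurable
  · simp only [density, Pi.add_apply]
    rw [norm_div, norm_mul, RCLike.norm_conj, Complex.norm_real,
      Real.norm_of_nonneg (weight_nonneg p z.2), ← add_div]
    refine div_le_div_of_nonneg_right ?_ (weight_nonneg p z.2)
    nlinarith [two_mul_le_add_sq ‖diffQuot A z.2 z.1‖ ‖diffQuot B z.2 z.1‖,
      norm_nonneg (diffQuot A z.2 z.1), norm_nonneg (diffQuot B z.2 z.1)]

theorem hasSum_density_slice (p : ℝ) {A B : UnitAddCircle → ℂ} (hA : MemLp A 2)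
    (hB : MemLp B 2) (x : ℝ × ℝ) :
    HasSum (fun k : ℤ => (rhoIntegrand p k x : ℂ) *
        ((starRingEnd ℂ) (fourierCoeff A k) * fourierCoeff B k))
      (∫ u, density p A B (u, x)) := by
  have h := (hasSum_conj_fourierCoeff_mul (memLp_diffQuot hA x)
    (memLp_diffQuot hB x)).div_const (weight p x : ℂ)
  rw [← integral_div] at h
  refine h.congr_fun fun k => ?_
  rw [fourierCoeff_diffQuot hA, fourierCoeff_diffQuot hB, rhoIntegrand_eq, map_mul]
  have := RCLike.conj_mul (symbol k x)
  push_cast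
  simp only [Complex.coe_algebraMap] at this
  rw [← this]
  ring

theorem summable_rhoCoef_mul_fourierCoeff {p : ℝ} (hp : 2 < p) (hp' : p < 8 / 3)
    {A B : UnitAddCircle → ℂ}
    (hsA : Summable fun k : ℤ => (1 + (k : ℝ) ^ 2) ^ (3 * p / 2 - 2) * ‖fourierCoeff A k‖ ^ 2)
    (hsB : Summable fun k : ℤ => (1 + (k : ℝ) ^ 2) ^ (3 * p / 2 - 2) * ‖fourierCoeff B k‖ ^ 2) :
    Summable fun k : ℤ => rhoCoef p k * (‖fourierCoeff A k‖ * ‖fourierCoeff B k‖) := by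
  have h := (summable_rhoCoef_mul hp hp' (fun k => sq_nonneg ‖fourierCoeff A k‖) hsA).add
    (summable_rhoCoef_mul hp hp' (fun k => sq_nonneg ‖fourierCoeff B k‖) hsB)
  refine h.of_nonneg_of_le (fun k => mul_nonneg (rhoCoef_nonneg p k) (by positivity))
    fun k => ?_
  rw [← mul_add]
  refine mul_le_mul_of_nonneg_left ?_ (rhoCoef_nonneg p k)
  nlinarith [two_mul_le_add_sq ‖fourierCoeff A k‖ ‖fourierCoeff B k‖,
    norm_nonneg (fourierCoeff A k), norm_nonneg (fourierCoeff B k)]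

theorem hasSum_integral_density {p : ℝ} (hp : 2 < p) (hp' : p < 8 / 3)
    {A B : UnitAddCircle → ℂ} (hA : MemLp A 2) (hB : MemLp B 2)
    (hsA : Summable fun k : ℤ => (1 + (k : ℝ) ^ 2) ^ (3 * p / 2 - 2) * ‖fourierCoeff A k‖ ^ 2)
    (hsB : Summable fun k : ℤ => (1 + (k : ℝ) ^ 2) ^ (3 * p / 2 - 2) * ‖fourierCoeff B k‖ ^ 2) :
    HasSum (fun k : ℤ => (rhoCoef p k : ℂ) *
        ((starRingEnd ℂ) (fourierCoeff A k) * fourierCoeff B k))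
      (∫ z, density p A B z
        ∂(volume : Measure UnitAddCircle).prod (volume.restrict domainD)) := by
  rw [integral_prod_symm _ (integrable_density hp hp' hA hB hsA hsB)]
  simp only [← (hasSum_density_slice p hA hB _).tsum_eq]
  have hint : ∀ k : ℤ, Integrable (fun x => (rhoIntegrand p k x : ℂ) *
      ((starRingEnd ℂ) (fourierCoeff A k) * fourierCoeff B k)) (volume.restrict domainD) :=
    fun k => (integrableOn_rhoIntegrand hp hp' k).ofReal.mul_const _
  have h := hasSum_integral_of_summable_integral_norm hint ?_
  · refine h.congr_fun fun k => ?_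
    rw [integral_mul_const, integral_complex_ofReal, rhoCoef]
  · simp only [norm_mul, RCLike.norm_conj, Complex.norm_real,
      Real.norm_of_nonneg (rhoIntegrand_nonneg p _ _), integral_mul_const]
    exact summable_rhoCoef_mul_fourierCoeff hp hp' hsA hsB

/-- The `j`-th component of a `1`-periodic vector-valued function, as a complex-valued function
on the circle. -/
def component {n : ℕ} {f : ℝ → EuclideanSpace ℝ (Fin n)} (hf : Function.Periodic f 1)
    (j : Fin n) : UnitAddCircle → ℂ :=
  Function.Periodic.lift (f := fun x => (f x j : ℂ)) (c := 1) fun x => by simp only [hf x]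

theorem component_coe {n : ℕ} {f : ℝ → EuclideanSpace ℝ (Fin n)}
    (hf : Function.Periodic f 1) (j : Fin n) (x : ℝ) :
    component hf j (x : UnitAddCircle) = (f x j : ℂ) := rfl

theorem memLp_component {n : ℕ} {f : ℝ → EuclideanSpace ℝ (Fin n)}
    (hf : Function.Periodic f 1) (hfm : MemLp f 2 (volume.restrict (Ico (0 : ℝ) 1)))
    (j : Fin n) : MemLp (component hf j) 2 := by
  have h1 : MemLp (fun x => (f x j : ℂ)) 2 (volume.restrict (Ioc (0 : ℝ) (0 + 1))) := by
    rw [zero_add, ← restrict_Ico_eq_restrict_Ioc]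
    refine MemLp.of_le hfm ?_ (Eventually.of_forall fun x => ?_)
    · have hc : Continuous fun y : EuclideanSpace ℝ (Fin n) => ((y j : ℝ) : ℂ) := by fun_prop
      exact hc.comp_aestronglyMeasurable hfm.1
    · rw [Complex.norm_real]
      exact PiLp.norm_apply_le (f x) j
  have h2 : component hf j = AddCircle.liftIoc 1 0 (fun x => (f x j : ℂ)) := by
    funext b
    have hb : b ∈ ((↑) : ℝ → UnitAddCircle) '' Ioc (0 : ℝ) (0 + 1) := by
      rw [AddCircle.coe_image_Ioc_eq]; trivial
    obtain ⟨x, hx, rfl⟩ := hb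
    rw [AddCircle.liftIoc_coe_apply hx, component_coe]
  rw [h2]
  exact h1.memLp_liftIoc

theorem fourierCoef_apply {n : ℕ} {f : ℝ → EuclideanSpace ℝ (Fin n)}
    (hf : Function.Periodic f 1) (k : ℤ) (j : Fin n) :
    fourierCoef f k j = fourierCoeff (component hf j) k := by
  rw [fourierCoeff_eq_intervalIntegral _ _ 0, zero_add,
    intervalIntegral.integral_of_le zero_le_one, ← restrict_Ico_eq_restrict_Ioc]
  simp only [fourierCoef, WithLp.equiv_symm_apply, div_one, one_smul, component_coe]
  refine integral_congr_ae (Eventually.of_forall fun x => ?_)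
  simp only [fourier_coe_apply, smul_eq_mul]
  rw [mul_comm]
  congr 2
  push_cast
  ring

theorem summable_component {n : ℕ} {p : ℝ} {f : ℝ → EuclideanSpace ℝ (Fin n)}
    (hf : Function.Periodic f 1)
    (hs : Summable fun k : ℤ => (1 + (k : ℝ) ^ 2) ^ (3 * p / 2 - 2) * ‖fourierCoef f k‖ ^ 2)
    (j : Fin n) :
    Summable fun k : ℤ =>
      (1 + (k : ℝ) ^ 2) ^ (3 * p / 2 - 2) * ‖fourierCoeff (component hf j) k‖ ^ 2 := by
  refine hs.of_nonneg_of_le (fun k => by positivity) fun k => ?_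
  rw [← fourierCoef_apply]
  gcongr
  exact PiLp.norm_apply_le _ _

theorem integrand_eq_sum_density {n : ℕ} (p : ℝ) {f g : ℝ → EuclideanSpace ℝ (Fin n)}
    (hf : Function.Periodic f 1) (hg : Function.Periodic g 1) (u : ℝ) (x : ℝ × ℝ) :
    (((inner ℝ (x.2⁻¹ • (f (u + x.2) - f u) - x.1⁻¹ • (f (u + x.1) - f u))
           (x.2⁻¹ • (g (u + x.2) - g u) - x.1⁻¹ • (g (u + x.1) - g u)) : ℝ) /
      (|x.1 - x.2| ^ p * |x.1| ^ (p - 2) * |x.2| ^ (p - 2)) : ℝ) : ℂ) =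
    ∑ j, density p (component hf j) (component hg j) (u, x) := by
  have hw : |x.1 - x.2| ^ p * |x.1| ^ (p - 2) * |x.2| ^ (p - 2) = weight p x := by
    unfold weight; ring
  have hd : ∀ {h : ℝ → EuclideanSpace ℝ (Fin n)} (hh : Function.Periodic h 1) (j : Fin n),
      diffQuot (component hh j) x u
        = (((x.2⁻¹ • (h (u + x.2) - h u) - x.1⁻¹ • (h (u + x.1) - h u)) j : ℝ) : ℂ) := by
    intro h hh j
    simp only [diffQuot, ← AddCircle.coe_add, component_coe]
    simp
  rw [hw, PiLp.inner_apply, Finset.sum_div]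
  push_cast
  refine Finset.sum_congr rfl fun j _ => ?_
  simp only [density, hd, Complex.conj_ofReal]
  rw [RCLike.inner_apply]
  simp
  ring

theorem Qform_eq_sum_integral_density {n : ℕ} {p : ℝ} {f g : ℝ → EuclideanSpace ℝ (Fin n)}
    (hf : Function.Periodic f 1) (hg : Function.Periodic g 1)
    (hint : ∀ j, Integrable (density p (component hf j) (component hg j))
      ((volume : Measure UnitAddCircle).prod (volume.restrict domainD))) :
    ((Qform p f g : ℝ) : ℂ) = ∑ j, ∫ z, density p (component hf j) (component hg j) z
        ∂(volume : Measure UnitAddCircle).prod (volume.restrict domainD) := by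
  have hint' := integrable_finsetSum Finset.univ fun j _ => hint j
  rw [← integral_finsetSum _ fun j _ => hint j, integral_prod _ hint',
    ← UnitAddCircle.integral_preimage 0, zero_add, ← restrict_Ico_eq_restrict_Ioc, Qform,
    ← integral_complex_ofReal]
  simp only [← integral_complex_ofReal, integrand_eq_sum_density p hf hg]

theorem hasSum_Qform {n : ℕ} {p : ℝ} (hp : 2 < p) (hp' : p < 8 / 3)
    {f g : ℝ → EuclideanSpace ℝ (Fin n)}
    (hf : Function.Periodic f 1) (hg : Function.Periodic g 1)
    (hfm : MemLp f 2 (volume.restrict (Ico (0 : ℝ) 1)))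
    (hgm : MemLp g 2 (volume.restrict (Ico (0 : ℝ) 1)))
    (hfs : Summable fun k : ℤ => (1 + (k : ℝ) ^ 2) ^ (3 * p / 2 - 2) * ‖fourierCoef f k‖ ^ 2)
    (hgs : Summable fun k : ℤ => (1 + (k : ℝ) ^ 2) ^ (3 * p / 2 - 2) * ‖fourierCoef g k‖ ^ 2) :
    HasSum (fun k : ℤ => (rhoCoef p k : ℂ) * inner ℂ (fourierCoef f k) (fourierCoef g k))
      ((Qform p f g : ℝ) : ℂ) := by
  rw [Qform_eq_sum_integral_density hf hg fun j => integrable_density hp hp'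
    (memLp_component hf hfm j) (memLp_component hg hgm j) (summable_component hf hfs j)
    (summable_component hg hgs j)]
  refine (hasSum_sum fun j _ => hasSum_integral_density hp hp'
    (memLp_component hf hfm j) (memLp_component hg hgm j) (summable_component hf hfs j)
    (summable_component hg hgs j)).congr_fun fun k => ?_
  rw [PiLp.inner_apply, Finset.mul_sum]
  refine Finset.sum_congr rfl fun j _ => ?_
  rw [RCLike.inner_apply, fourierCoef_apply hf, fourierCoef_apply hg, mul_comm (fourierCoeff _ _)]

/-- **Fourier representation of the leading-order bilinear form `Q^{(p)}`.**
For `p ∈ (7/3, 8/3)` and `f, g ∈ W^{3p/2-2,2}(ℝ/ℤ,ℝⁿ)` one has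
`Q^{(p)}(f,g) = Σ_k ρ_k ⟨f̂_k, ĝ_k⟩_{ℂⁿ}`, and
`ρ_k / |k|^{3p-4} → c ∈ (0,∞)` as `|k| → ∞`, i.e.
`ρ_k = c |k|^{3p-4} + o(|k|^{3p-4})`. -/
theorem Qform_fourier (n : ℕ) (p : ℝ) (hp : p ∈ Ioo (7/3 : ℝ) (8/3)) :
    (∀ f g : ℝ → EuclideanSpace ℝ (Fin n),
      Function.Periodic f 1 → Function.Periodic g 1 →
      MemLp f 2 (volume.restrict (Ico (0:ℝ) 1)) →
      MemLp g 2 (volume.restrict (Ico (0:ℝ) 1)) →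
      Summable (fun k : ℤ => (1 + (k:ℝ)^2) ^ (3*p/2 - 2) * ‖fourierCoef f k‖^2) →
      Summable (fun k : ℤ => (1 + (k:ℝ)^2) ^ (3*p/2 - 2) * ‖fourierCoef g k‖^2) →
      ((Qform p f g : ℝ) : ℂ) =
        ∑' k : ℤ, ((rhoCoef p k : ℝ) : ℂ) *
          (inner ℂ (fourierCoef f k) (fourierCoef g k) : ℂ)) ∧
    IntegrableOn (rhoIntegrand p 1) {y : ℝ × ℝ | y.1 < 0 ∧ 0 < y.2} ∧
    0 < climit p ∧
    Tendsto (fun k : ℤ => rhoCoef p k / |(k : ℝ)| ^ (3*p - 4))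
      cofinite (𝓝 (climit p)) := by
  have hp1 : 2 < p := by linarith [hp.1]
  exact ⟨fun f g hf hg hfm hgm hfs hgs =>
      (hasSum_Qform hp1 hp.2 hf hg hfm hgm hfs hgs).tsum_eq.symm,
    integrableOn_rhoIntegrand_one hp1 hp.2, climit_pos hp1 hp.2, tendsto_rhoCoef_div hp1 hp.2⟩
end
end

section
/- Let q > 1 and p ≥ q + 2/3. Then every injective, arc-length parametrized curve γ ∈ C¹(ℝ/ℤ,ℝⁿ) satisfies E_{p,q}(γ) = ∞; that is, in this parameter range there are no closed finite-energy C¹ knots at all. -/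
open MeasureTheory Set Filter Topology
open scoped ENNReal

noncomputable section

/-- The area `|a ∧ b|` of the parallelogram spanned by `a, b ∈ ℝⁿ`. -/
def wedgeNorm {n : ℕ} (a b : EuclideanSpace ℝ (Fin n)) : ℝ :=
  Real.sqrt (‖a‖ ^ 2 * ‖b‖ ^ 2 - (inner ℝ a b : ℝ) ^ 2)

/-- `1 / R^{p,q}(x,y,z) = |(y-x) ∧ (z-x)|^q / (|y-z| |y-x| |z-x|)^p`. -/
def invR {n : ℕ} (p q : ℝ) (x y z : EuclideanSpace ℝ (Fin n)) : ℝ :=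
  wedgeNorm (y - x) (z - x) ^ q / (‖y - z‖ * ‖y - x‖ * ‖z - x‖) ^ p

/-- The generalized integral Menger curvature `E_{p,q}` of a closed curve,
modelled by a `1`-periodic function together with its derivative,
the parameter domain `ℝ/ℤ` being represented by `[0,1)`; values in `[0,∞]`. -/
def menger {n : ℕ} (p q : ℝ) (γ γ' : ℝ → EuclideanSpace ℝ (Fin n)) : ℝ≥0∞ :=
  ∫⁻ u₁ in Ico (0:ℝ) 1, ∫⁻ u₂ in Ico (0:ℝ) 1, ∫⁻ u₃ in Ico (0:ℝ) 1,
    ENNReal.ofReal (‖γ' u₁‖ * ‖γ' u₂‖ * ‖γ' u₃‖ * invR p q (γ u₁) (γ u₂) (γ u₃))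

/-- Injectivity of a `1`-periodic curve as a map on `ℝ/ℤ`. -/
def InjCircle {n : ℕ} (γ : ℝ → EuclideanSpace ℝ (Fin n)) : Prop :=
  ∀ u v : ℝ, γ u = γ v → ∃ k : ℤ, v = u + k

/-- Distance on `ℝ/ℤ`. -/
def circleDist (u v : ℝ) : ℝ := ⨅ k : ℤ, |u - v - (k : ℝ)|

/-- The `ρ`-th power of the Sobolev–Slobodeckiĭ seminorm `[f]_{W^{1+s,ρ}}`
of a periodic function with derivative `f'`; values in `[0,∞]`. -/
def sobSemiPow {n : ℕ} (s ρ : ℝ) (f' : ℝ → EuclideanSpace ℝ (Fin n)) : ℝ≥0∞ :=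
  ∫⁻ u in Ico (0:ℝ) 1, ∫⁻ w in Icc (-(1/2) : ℝ) (1/2),
    ENNReal.ofReal (‖f' (u + w) - f' u‖ ^ ρ / |w| ^ (1 + ρ * s))

/-- The norm `‖f‖_{W^{1+s,ρ}} = ‖f‖_{W^{1,ρ}} + [f]_{W^{1+s,ρ}}`. -/
def sobNorm {n : ℕ} (s ρ : ℝ) (f f' : ℝ → EuclideanSpace ℝ (Fin n)) : ℝ :=
  (∫ u in Ico (0:ℝ) 1, ‖f u‖ ^ ρ) ^ (1/ρ) + (∫ u in Ico (0:ℝ) 1, ‖f' u‖ ^ ρ) ^ (1/ρ)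
    + (sobSemiPow s ρ f').toReal ^ (1/ρ)

/-- `γ` is a closed `W^{1,1}` curve with weak derivative `γ'`:
both are `1`-periodic, `γ'` is measurable and `γ` is the primitive of `γ'`. -/
structure CurvePair {n : ℕ} (γ γ' : ℝ → EuclideanSpace ℝ (Fin n)) : Prop where
  periodic : Function.Periodic γ 1
  periodic' : Function.Periodic γ' 1
  meas' : Measurable γ'
  primitive : ∀ u, γ u = γ 0 + ∫ t in (0:ℝ)..u, γ' t

theorem abs_minor_le_two_mul_wedgeNorm {n : ℕ} (a b e f : EuclideanSpace ℝ (Fin n))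
    (he : ‖e‖ = 1) (hf : ‖f‖ = 1) :
    |inner ℝ a e * inner ℝ b f - inner ℝ a f * inner ℝ b e| ≤ 2 * wedgeNorm a b := by
  have hw : 0 ≤ wedgeNorm a b := Real.sqrt_nonneg _
  rcases eq_or_ne b 0 with rfl | hb
  · simpa using hw
  have hb' : 0 < ‖b‖ := norm_pos_iff.2 hb
  set a' := (‖b‖ ^ 2) • a - (inner ℝ a b : ℝ) • b with ha'
  set v := (inner ℝ b f : ℝ) • e - (inner ℝ b e : ℝ) • f with hv
  have hnorm : ‖a'‖ = ‖b‖ * wedgeNorm a b := by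
    have h2 : ‖a'‖ ^ 2 = ‖b‖ ^ 2 * (‖a‖ ^ 2 * ‖b‖ ^ 2 - (inner ℝ a b : ℝ) ^ 2) := by
      rw [ha', norm_sub_sq_real, norm_smul, norm_smul, inner_smul_left, inner_smul_right,
        mul_pow, mul_pow]
      simp only [Real.norm_eq_abs, sq_abs, conj_trivial]
      ring
    rw [wedgeNorm, ← Real.sqrt_sq (norm_nonneg a'), h2, Real.sqrt_mul (by positivity),
      Real.sqrt_sq hb'.le]
  have hvn : ‖v‖ ≤ 2 * ‖b‖ := by
    have h1 := abs_real_inner_le_norm b f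
    have h2 := abs_real_inner_le_norm b e
    have h3 : ‖v‖ ≤ ‖(inner ℝ b f : ℝ) • e‖ + ‖(inner ℝ b e : ℝ) • f‖ := norm_sub_le _ _
    rw [norm_smul, norm_smul, he, hf, Real.norm_eq_abs, Real.norm_eq_abs] at h3
    rw [hf] at h1
    rw [he] at h2
    linarith
  have hinner : inner ℝ a' v =
      ‖b‖ ^ 2 * (inner ℝ a e * inner ℝ b f - inner ℝ a f * inner ℝ b e) := by
    rw [ha', hv]
    simp only [inner_sub_left, inner_sub_right, inner_smul_left, inner_smul_right, conj_trivial]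
    ring
  have hcs := abs_real_inner_le_norm a' v
  rw [hinner, abs_mul, abs_of_nonneg (by positivity : (0:ℝ) ≤ ‖b‖ ^ 2), hnorm] at hcs
  have : ‖b‖ ^ 2 * |inner ℝ a e * inner ℝ b f - inner ℝ a f * inner ℝ b e|
      ≤ ‖b‖ ^ 2 * (2 * wedgeNorm a b) := by
    calc _ ≤ _ := hcs
      _ ≤ ‖b‖ * wedgeNorm a b * (2 * ‖b‖) := by gcongr
      _ = _ := by ring
  exact le_of_mul_le_mul_left this (by positivity)

theorem mul_rpow_sub_one_le {q t l : ℝ} (hq : 1 < q) (ht : 0 ≤ t) (hl : 0 < l) :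
    t * l ^ (q - 1) ≤ l ^ q + t ^ q := by
  have key : ∀ x : ℝ, 0 < x → x * x ^ (q - 1) = x ^ q := fun x hx => by
    rw [← Real.rpow_one_add' hx.le (by linarith)]; congr 1; ring
  rcases le_total t l with h | h
  · calc t * l ^ (q - 1) ≤ l * l ^ (q - 1) := by gcongr
      _ = l ^ q := key l hl
      _ ≤ _ := by linarith [Real.rpow_nonneg ht q]
  · calc t * l ^ (q - 1) ≤ t * t ^ (q - 1) := by
          gcongr
      _ = t ^ q := key t (hl.trans_le h)
      _ ≤ _ := by linarith [Real.rpow_nonneg hl.le q]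

theorem le_sum_rpow_of_le_sum {q η L h : ℝ} (hq : 1 < q) (hη : 0 < η) (hL : 0 < L) (hh : 0 < h)
    (N : ℕ) (hN : N * h ≤ L) (f g : ℕ → ℝ) (hf : ∀ j, 0 ≤ f j) (hg : ∀ j, 0 ≤ g j)
    (hsum : η ≤ ∑ j ∈ Finset.range N, (f j + g j)) :
    η / 2 * (η * h / (4 * L)) ^ (q - 1) ≤ ∑ j ∈ Finset.range N, (f j ^ q + g j ^ q) := by
  set l := η * h / (4 * L) with hl
  have hl0 : 0 < l := by positivity
  have hlq : l ^ q = l * l ^ (q - 1) := by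
    rw [← Real.rpow_one_add' hl0.le (by linarith)]; congr 1; ring
  have h1 : (∑ j ∈ Finset.range N, (f j + g j)) * l ^ (q - 1)
      ≤ N * (2 * l ^ q) + ∑ j ∈ Finset.range N, (f j ^ q + g j ^ q) := by
    rw [Finset.sum_mul]
    calc _ ≤ ∑ j ∈ Finset.range N, (2 * l ^ q + (f j ^ q + g j ^ q)) := by
          gcongr with j
          linarith [mul_rpow_sub_one_le hq (hf j) hl0, mul_rpow_sub_one_le hq (hg j) hl0]
      _ = _ := by simp [Finset.sum_add_distrib]
  have h2 : N * (2 * l) ≤ η / 2 := by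
    rw [hl]
    calc (N : ℝ) * (2 * (η * h / (4 * L))) = (N * h) * (η / (2 * L)) := by field_simp; ring
      _ ≤ L * (η / (2 * L)) := by gcongr
      _ = η / 2 := by field_simp
  have h3 : 0 < l ^ (q - 1) := Real.rpow_pos_of_pos hl0 _
  have h4 := mul_le_mul_of_nonneg_right hsum h3.le
  have h5 := mul_le_mul_of_nonneg_right h2 h3.le
  rw [hlq] at h1
  nlinarith

theorem setLIntegral_translate_le {s t : Set ℝ} (hs : MeasurableSet s) (ht : MeasurableSet t)
    (x : ℝ) (hst : ∀ u ∈ s, x + u ∈ t) (f : ℝ → ℝ≥0∞) :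
    ∫⁻ u in s, f (x + u) ≤ ∫⁻ u in t, f u := by
  rw [← lintegral_indicator hs, ← lintegral_indicator ht,
    ← lintegral_add_left_eq_self (t.indicator f) x]
  refine lintegral_mono fun u => ?_
  by_cases hu : u ∈ s
  · simp [hu, hst u hu]
  · simp [hu]

theorem lintegral_slope_lower_bound {q s t r η : ℝ} (hq : 1 < q) (hst : s < t) (hr : 0 < r)
    (hη : 0 < η) (F : ℝ → ℝ → ℝ) (hF : Measurable (Function.uncurry F))
    (hsep : ∀ a ∈ Ioo 0 (r / 8), ∀ u ∈ Ioo s (s + r / 4), ∀ v ∈ Ioo (t - r / 4) (t + r / 4),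
      η ≤ |F a v - F a u|) :
    ∃ C : ℝ, 0 < C ∧ ∀ a ∈ Ioo 0 (r / 8), ∀ c ∈ Ioo 0 (r / 8),
      ENNReal.ofReal (C * (a + c) ^ q) ≤
        (∫⁻ u in Ioo s (t + r / 2), ENNReal.ofReal (|F a u - F c (u + a)| ^ q)) +
        ∫⁻ u in Ioo s (t + r / 2), ENNReal.ofReal (|F c u - F a (u + c)| ^ q) := by
  have hL : 0 < t - s := sub_pos.2 hst
  refine ⟨(η / 2) * (η / (4 * (t - s))) ^ (q - 1) * (r / 4) / (t - s), by positivity, ?_⟩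
  intro a ha c hc
  have hm : ∀ b, Measurable (F b) := fun b => hF.comp (measurable_const.prodMk measurable_id)
  set h := a + c with hh
  have hh0 : 0 < h := add_pos ha.1 hc.1
  have hh4 : h < r / 4 := by linarith [ha.2, hc.2]
  set N := ⌊(t - s) / h⌋₊ with hNdef
  have hN : N * h ≤ t - s := by
    rw [← le_div_iff₀ hh0]; exact Nat.floor_le (by positivity)
  have hN' : t - s < N * h + h := by
    have := Nat.lt_floor_add_one ((t - s) / h)
    rw [div_lt_iff₀ hh0] at this
    linarith
  set f : ℝ → ℝ := fun u => |F a u - F c (u + a)| with hf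
  set g : ℝ → ℝ := fun u => |F c u - F a (u + c)| with hg
  have hfm : Measurable f :=
    ((hm a).sub ((hm c).comp (measurable_id.add_const a))).norm
  have hgm : Measurable g :=
    ((hm c).sub ((hm a).comp (measurable_id.add_const c))).norm
  set A := ∫⁻ u in Ioo s (t + r / 2), ENNReal.ofReal (f u ^ q) with hA
  set B := ∫⁻ u in Ioo s (t + r / 2), ENNReal.ofReal (g u ^ q) with hB
  have hpt : ∀ u ∈ Ioo s (s + r / 4), η / 2 * (η * h / (4 * (t - s))) ^ (q - 1) ≤
      ∑ j ∈ Finset.range N, (f (j * h + u) ^ q + g (j * h + a + u) ^ q) := by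
    intro u hu
    refine le_sum_rpow_of_le_sum hq hη hL hh0 N hN (fun j => f (j * h + u))
      (fun j => g (j * h + a + u)) (fun j => abs_nonneg _) (fun j => abs_nonneg _) ?_
    have h1 := hsep a ha u hu (N * h + u) ⟨by linarith [hu.1], by linarith [hu.2]⟩
    refine h1.trans ?_
    have h2 : F a (N * h + u) - F a u =
        ∑ j ∈ Finset.range N, (F a ((j + 1 : ℕ) * h + u) - F a (j * h + u)) := by
      rw [Finset.sum_range_sub (fun j : ℕ => F a (j * h + u))]; simp
    rw [h2]
    refine (Finset.abs_sum_le_sum_abs _ _).trans (Finset.sum_le_sum fun j _ => ?_)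
    have e1 : ((j + 1 : ℕ) : ℝ) * h + u = j * h + a + u + c := by
      push_cast; rw [hh]; ring
    have e2 : (j : ℝ) * h + u + a = j * h + a + u := by ring
    rw [e1]
    simp only [hf, hg]
    rw [e2, abs_sub_comm (F a (j * h + a + u + c))]
    exact abs_sub_le (F a (j * h + u)) (F c (j * h + a + u)) (F a (j * h + a + u + c))
  have hint : ENNReal.ofReal (η / 2 * (η * h / (4 * (t - s))) ^ (q - 1) * (r / 4)) ≤
      N * (A + B) := by
    calc _ = ∫⁻ _ in Ioo s (s + r / 4),
            ENNReal.ofReal (η / 2 * (η * h / (4 * (t - s))) ^ (q - 1)) := by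
          rw [setLIntegral_const, Real.volume_Ioo, add_sub_cancel_left,
            ENNReal.ofReal_mul (by positivity)]
      _ ≤ ∫⁻ u in Ioo s (s + r / 4), ∑ j ∈ Finset.range N,
            (ENNReal.ofReal (f (j * h + u) ^ q) + ENNReal.ofReal (g (j * h + a + u) ^ q)) := by
          refine setLIntegral_mono' measurableSet_Ioo fun u hu => ?_
          refine (ENNReal.ofReal_le_ofReal (hpt u hu)).trans (le_of_eq ?_)
          rw [ENNReal.ofReal_sum_of_nonneg fun j _ => add_nonneg
            (Real.rpow_nonneg (abs_nonneg _) _) (Real.rpow_nonneg (abs_nonneg _) _)]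
          refine Finset.sum_congr rfl fun j _ => ?_
          exact ENNReal.ofReal_add (Real.rpow_nonneg (abs_nonneg _) _)
            (Real.rpow_nonneg (abs_nonneg _) _)
      _ = ∑ j ∈ Finset.range N, ((∫⁻ u in Ioo s (s + r / 4), ENNReal.ofReal (f (j * h + u) ^ q))
            + ∫⁻ u in Ioo s (s + r / 4), ENNReal.ofReal (g (j * h + a + u) ^ q)) := by
          rw [lintegral_finsetSum _ fun j _ => by fun_prop]
          refine Finset.sum_congr rfl fun j _ => lintegral_add_left (by fun_prop) _
      _ ≤ ∑ j ∈ Finset.range N, (A + B) := by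
          refine Finset.sum_le_sum fun j hj => ?_
          have hj1 : ((j : ℝ) + 1) ≤ N := by exact_mod_cast Finset.mem_range.1 hj
          have hj2 : (j : ℝ) * h + h ≤ t - s := by nlinarith
          have hj3 : 0 ≤ (j : ℝ) * h := by positivity
          refine add_le_add
            (setLIntegral_translate_le measurableSet_Ioo measurableSet_Ioo (j * h)
              (fun u hu => ⟨by linarith [hu.1], by linarith [hu.2]⟩)
              fun u => ENNReal.ofReal (f u ^ q))
            (setLIntegral_translate_le measurableSet_Ioo measurableSet_Ioo (j * h + a)
              (fun u hu => ⟨by linarith [hu.1, ha.1], by linarith [hu.2, hc.1]⟩)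
              fun u => ENNReal.ofReal (g u ^ q))
      _ = N * (A + B) := by rw [Finset.sum_const, Finset.card_range, nsmul_eq_mul]
  have hpow : (η / 2) * (η / (4 * (t - s))) ^ (q - 1) * (r / 4) / (t - s) * h ^ q =
      h / (t - s) * (η / 2 * (η * h / (4 * (t - s))) ^ (q - 1) * (r / 4)) := by
    have : h ^ q = h * h ^ (q - 1) := by
      rw [← Real.rpow_one_add' hh0.le (by linarith)]; congr 1; ring
    rw [this, show η * h / (4 * (t - s)) = η / (4 * (t - s)) * h by ring,
      Real.mul_rpow (by positivity) hh0.le]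
    ring
  rw [hpow, ENNReal.ofReal_mul (by positivity)]
  calc _ ≤ ENNReal.ofReal (h / (t - s)) * (N * (A + B)) := by gcongr
    _ = ENNReal.ofReal (h / (t - s) * N) * (A + B) := by
        rw [ENNReal.ofReal_mul (by positivity), ENNReal.ofReal_natCast, mul_assoc]
    _ ≤ 1 * (A + B) := by
        gcongr
        rw [← ENNReal.ofReal_one]
        refine ENNReal.ofReal_le_ofReal ?_
        rw [div_mul_eq_mul_div, div_le_one hL]
        linarith
    _ = A + B := one_mul _

theorem lintegral_inv_Ioo_eq_top {δ : ℝ} (hδ : 0 < δ) :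
    ∫⁻ a in Ioo 0 δ, ENNReal.ofReal a⁻¹ = ⊤ := by
  by_contra hne
  have hi : IntegrableOn (fun a : ℝ => a⁻¹) (Ioo 0 δ) := by
    refine ⟨by fun_prop, ?_⟩
    rw [hasFiniteIntegral_iff_ofReal]
    · exact lt_top_iff_ne_top.2 hne
    · filter_upwards [ae_restrict_mem measurableSet_Ioo] with a ha using (inv_pos.2 ha.1).le
  have := (intervalIntegrable_iff_integrableOn_Ioo_of_le (μ := volume) hδ.le).2 hi
  simp [intervalIntegrable_inv_iff, hδ.ne, hδ.le] at this

theorem lintegral_weight_eq_top {q C δ : ℝ} (hC : 0 < C) (hδ : 0 < δ)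
    (H : ℝ → ℝ → ℝ≥0∞) (hH : Measurable (Function.uncurry H))
    (hlow : ∀ a ∈ Ioo 0 δ, ∀ c ∈ Ioo 0 δ, ENNReal.ofReal (C * (a + c) ^ q) ≤ H a c + H c a) :
    ∫⁻ a in Ioo 0 δ, ∫⁻ c in Ioo 0 δ,
      ENNReal.ofReal ((a * c) ^ q / (a * c * (a + c)) ^ (q + 2 / 3)) * H a c = ⊤ := by
  set w : ℝ → ℝ → ℝ≥0∞ := fun a c =>
    ENNReal.ofReal ((a * c) ^ q / (a * c * (a + c)) ^ (q + 2 / 3)) with hw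
  have hwm : Measurable (Function.uncurry w) := by
    simp only [hw, Function.uncurry_def]; fun_prop
  have hH' : Measurable fun x : ℝ × ℝ => H x.1 x.2 := hH
  have hwm' : Measurable fun x : ℝ × ℝ => w x.1 x.2 := hwm
  have hwsymm : ∀ a c, w a c = w c a := fun a c => by
    simp only [hw]; rw [mul_comm a c, add_comm a c]
  set E := ∫⁻ a in Ioo 0 δ, ∫⁻ c in Ioo 0 δ, w a c * H a c with hE
  have hswap : E = ∫⁻ a in Ioo 0 δ, ∫⁻ c in Ioo 0 δ, w a c * H c a := by
    rw [hE, lintegral_lintegral_swap (hwm'.mul hH').aemeasurable]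
    simp_rw [hwsymm]
  have hdouble : E + E = ∫⁻ a in Ioo 0 δ, ∫⁻ c in Ioo 0 δ, w a c * (H a c + H c a) := by
    nth_rewrite 2 [hswap]
    have hm : Measurable fun a => ∫⁻ c in Ioo 0 δ, w a c * H a c :=
      Measurable.lintegral_prod_right' (hwm'.mul hH')
    rw [hE, ← lintegral_add_left hm]
    refine lintegral_congr fun a => ?_
    rw [← lintegral_add_left (by fun_prop)]
    simp_rw [mul_add]
  have htop : E + E = ⊤ := by
    rw [hdouble, eq_top_iff]
    have hK : 0 < C * 2 ^ (-(2 / 3) : ℝ) := by positivity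
    calc (⊤ : ℝ≥0∞) = ENNReal.ofReal (C * 2 ^ (-(2 / 3) : ℝ)) *
          ∫⁻ a in Ioo 0 δ, ENNReal.ofReal a⁻¹ := by
          rw [lintegral_inv_Ioo_eq_top hδ, ENNReal.mul_top (by simpa using hK)]
      _ = ∫⁻ a in Ioo 0 δ, ENNReal.ofReal (C * 2 ^ (-(2 / 3) : ℝ)) * ENNReal.ofReal a⁻¹ := by
          rw [lintegral_const_mul _ (by fun_prop)]
      _ ≤ _ := by
          refine setLIntegral_mono' measurableSet_Ioo fun a ha => ?_
          have ha0 : 0 < a := ha.1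
          calc _ = ∫⁻ _ in Ioo 0 a, ENNReal.ofReal (C * 2 ^ (-(2 / 3) : ℝ) * (a ^ 2)⁻¹) := by
                rw [setLIntegral_const, Real.volume_Ioo, sub_zero,
                  ← ENNReal.ofReal_mul hK.le, ← ENNReal.ofReal_mul (by positivity)]
                congr 1
                field_simp
            _ ≤ ∫⁻ c in Ioo 0 a, w a c * (H a c + H c a) := by
                refine setLIntegral_mono' measurableSet_Ioo fun c hc => ?_
                have hc0 : 0 < c := hc.1
                refine le_trans ?_ (mul_le_mul_right (hlow a ha c ⟨hc.1, hc.2.trans ha.2⟩) _)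
                rw [hw, ← ENNReal.ofReal_mul (by positivity)]
                refine ENNReal.ofReal_le_ofReal ?_
                have hV : 0 < a * c * (a + c) := by positivity
                have e1 : (a * c) ^ q / (a * c * (a + c)) ^ (q + 2 / 3) * (C * (a + c) ^ q) =
                    C * (a * c * (a + c)) ^ (-(2 / 3) : ℝ) := by
                  rw [Real.rpow_add hV, Real.rpow_neg hV.le,
                    Real.mul_rpow (x := a * c) (y := a + c) (z := q) (by positivity)
                      (by positivity)]
                  field_simp
                have e2 : (2 : ℝ) ^ (-(2 / 3) : ℝ) * (a ^ 2)⁻¹ =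
                    (2 * a ^ 3) ^ (-(2 / 3) : ℝ) := by
                  rw [Real.mul_rpow (by positivity) (by positivity), ← Real.rpow_natCast a 3,
                    ← Real.rpow_mul ha0.le, ← Real.rpow_natCast a 2, ← Real.rpow_neg ha0.le]
                  norm_num
                rw [e1, mul_assoc, e2]
                gcongr ?_ * ?_
                refine Real.rpow_le_rpow_of_nonpos hV ?_ (by norm_num)
                calc a * c * (a + c) ≤ a * a * (a + a) := by
                      gcongr <;> exact hc.2.le
                  _ = 2 * a ^ 3 := by ring
            _ ≤ _ := lintegral_mono_set (Ioo_subset_Ioo_right ha.2.le)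
  by_contra hne
  exact (ENNReal.add_ne_top.2 ⟨hne, hne⟩) htop

theorem le_invR {n : ℕ} {p q a c : ℝ} (hq : 1 < q) (hp : q + 2 / 3 ≤ p) (ha : 0 < a) (hc : 0 < c)
    (hac : a * c * (a + c) ≤ 1) (x y z e f : EuclideanSpace ℝ (Fin n))
    (he : ‖e‖ = 1) (hf : ‖f‖ = 1)
    (hxy : ‖y - x‖ ≤ a) (hyz : ‖z - y‖ ≤ c) (hxz : ‖z - x‖ ≤ a + c)
    (hXa : a / 2 ≤ inner ℝ (y - x) e) (hXc : c / 2 ≤ inner ℝ (z - y) e) :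
    (8⁻¹ : ℝ) ^ q * ((a * c) ^ q / (a * c * (a + c)) ^ (q + 2 / 3)) *
      |inner ℝ (y - x) f / inner ℝ (y - x) e - inner ℝ (z - y) f / inner ℝ (z - y) e| ^ q
      ≤ invR p q x y z := by
  set A : ℝ := inner ℝ (y - x) e with hA
  set B : ℝ := inner ℝ (z - y) e with hB
  set A' : ℝ := inner ℝ (y - x) f with hA'
  set B' : ℝ := inner ℝ (z - y) f with hB'
  have hA0 : 0 < A := by linarith
  have hB0 : 0 < B := by linarith
  have hzx : z - x = (y - x) + (z - y) := by abel
  have hAn : A ≤ ‖y - x‖ := by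
    have := real_inner_le_norm (y - x) e
    rwa [he, mul_one] at this
  have hBn : B ≤ ‖z - y‖ := by
    have := real_inner_le_norm (z - y) e
    rwa [he, mul_one] at this
  have hABn : A + B ≤ ‖z - x‖ := by
    have := real_inner_le_norm (z - x) e
    rwa [he, mul_one, hzx, inner_add_left, ← hzx] at this
  have hw : a * c / 8 * |A' / A - B' / B| ≤ wedgeNorm (y - x) (z - x) := by
    have h1 := abs_minor_le_two_mul_wedgeNorm (y - x) (z - x) e f he hf
    have h2 : inner ℝ (y - x) e * inner ℝ (z - x) f - inner ℝ (y - x) f * inner ℝ (z - x) e =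
        - (A * B * (A' / A - B' / B)) := by
      rw [hzx, inner_add_left, inner_add_left, ← hA, ← hB, ← hA', ← hB']
      field_simp
      ring
    rw [h2, abs_neg, abs_mul, abs_of_pos (mul_pos hA0 hB0)] at h1
    have h3 : a / 2 * (c / 2) ≤ A * B := by gcongr
    have h4 := mul_le_mul_of_nonneg_right h3 (abs_nonneg (A' / A - B' / B))
    linarith
  have hV0 : 0 < a * c * (a + c) := by positivity
  have hD : 0 < ‖y - z‖ * ‖y - x‖ * ‖z - x‖ := by
    rw [norm_sub_rev y z]
    have := hA0.trans_le hAn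
    have := hB0.trans_le hBn
    have : 0 < ‖z - x‖ := by linarith
    positivity
  have hDV : ‖y - z‖ * ‖y - x‖ * ‖z - x‖ ≤ a * c * (a + c) := by
    rw [norm_sub_rev y z, mul_comm ‖z - y‖]
    gcongr
  have hDp : (‖y - z‖ * ‖y - x‖ * ‖z - x‖) ^ p ≤ (a * c * (a + c)) ^ (q + 2 / 3) :=
    (Real.rpow_le_rpow hD.le hDV (by linarith)).trans
      (Real.rpow_le_rpow_of_exponent_ge hV0 hac hp)
  have e1 : (8⁻¹ : ℝ) ^ q * ((a * c) ^ q / (a * c * (a + c)) ^ (q + 2 / 3)) *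
      |A' / A - B' / B| ^ q =
      (a * c / 8 * |A' / A - B' / B|) ^ q / (a * c * (a + c)) ^ (q + 2 / 3) := by
    rw [Real.mul_rpow (by positivity) (abs_nonneg _), div_eq_mul_inv (a * c) 8,
      Real.mul_rpow (x := a * c) (y := 8⁻¹) (by positivity) (by positivity)]
    ring
  rw [e1, invR]
  have hw0 : 0 ≤ wedgeNorm (y - x) (z - x) := Real.sqrt_nonneg _
  gcongr

/-- The slope of the chord of `γ` from `u` to `u + a`, read in the coordinates along `e`
(abscissa) and `f` (ordinate). -/
def chordSlope {n : ℕ} (γ : ℝ → EuclideanSpace ℝ (Fin n)) (e f : EuclideanSpace ℝ (Fin n))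
    (a u : ℝ) : ℝ :=
  inner ℝ (γ (u + a) - γ u) f / inner ℝ (γ (u + a) - γ u) e

theorem measurable_chordSlope {n : ℕ} {γ : ℝ → EuclideanSpace ℝ (Fin n)} (hγ : Measurable γ)
    (e f : EuclideanSpace ℝ (Fin n)) : Measurable fun x : ℝ × ℝ => chordSlope γ e f x.1 x.2 := by
  simp only [chordSlope]
  fun_prop

theorem measurable_chordSlope_sub_rpow {n : ℕ} {γ : ℝ → EuclideanSpace ℝ (Fin n)}
    (hγ : Measurable γ) (e f : EuclideanSpace ℝ (Fin n)) (q : ℝ) :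
    Measurable fun x : (ℝ × ℝ) × ℝ => ENNReal.ofReal
      (|chordSlope γ e f x.1.1 x.2 - chordSlope γ e f x.1.2 (x.2 + x.1.1)| ^ q) := by
  simp only [chordSlope]
  fun_prop

theorem setLIntegral_weight_swap {I J K : Set ℝ} {w : ℝ → ℝ → ℝ≥0∞} {g : ℝ → ℝ → ℝ → ℝ≥0∞}
    (hw : Measurable fun x : ℝ × ℝ => w x.1 x.2)
    (hg : Measurable fun x : (ℝ × ℝ) × ℝ => g x.1.1 x.1.2 x.2) :
    ∫⁻ a in I, ∫⁻ c in J, w a c * ∫⁻ u in K, g a c u =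
      ∫⁻ u in K, ∫⁻ a in I, ∫⁻ c in J, w a c * g a c u := by
  have hwg : Measurable fun x : (ℝ × ℝ) × ℝ => w x.1.2 x.2 * g x.1.2 x.2 x.1.1 :=
    (hw.comp (by fun_prop : Measurable fun x : (ℝ × ℝ) × ℝ => (x.1.2, x.2))).mul
      (hg.comp (by fun_prop : Measurable fun x : (ℝ × ℝ) × ℝ => ((x.1.2, x.2), x.1.1)))
  have hin : Measurable fun x : ℝ × ℝ => ∫⁻ c in J, w x.2 c * g x.2 c x.1 :=
    Measurable.lintegral_prod_right' hwg
  symm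
  rw [lintegral_lintegral_swap hin.aemeasurable]
  refine lintegral_congr fun a => ?_
  have hwg' : Measurable fun x : ℝ × ℝ => w a x.2 * g a x.2 x.1 :=
    hwg.comp (by fun_prop : Measurable fun x : ℝ × ℝ => ((x.1, a), x.2))
  rw [lintegral_lintegral_swap hwg'.aemeasurable]
  refine lintegral_congr fun c => ?_
  exact lintegral_const_mul _ (hg.comp (by fun_prop : Measurable fun u : ℝ => ((a, c), u)))

theorem exists_chordSlope_eq {n : ℕ} {γ : ℝ → EuclideanSpace ℝ (Fin n)}
    (hγ : Differentiable ℝ γ) (e f : EuclideanSpace ℝ (Fin n)) {a u : ℝ} (ha : 0 < a)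
    (he : ∀ x ∈ Ioo u (u + a), 0 < inner ℝ (deriv γ x) e) :
    ∃ x ∈ Ioo u (u + a),
      chordSlope γ e f a u = inner ℝ (deriv γ x) f / inner ℝ (deriv γ x) e := by
  have hd : ∀ v : EuclideanSpace ℝ (Fin n), ∀ x,
      HasDerivAt (fun x => inner ℝ (γ x) v) (inner ℝ (deriv γ x) v) x := fun v x => by
    simpa using (hγ x).hasDerivAt.inner ℝ (hasDerivAt_const x v)
  have hlt : u < u + a := by linarith
  obtain ⟨x, hx, hxe⟩ := exists_ratio_hasDerivAt_eq_ratio_slope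
    (fun x => inner ℝ (γ x) f) (fun x => inner ℝ (deriv γ x) f) hlt
    (fun x _ => (hd f x).continuousAt.continuousWithinAt) (fun x _ => hd f x)
    (fun x => inner ℝ (γ x) e) (fun x => inner ℝ (deriv γ x) e)
    (fun x _ => (hd e x).continuousAt.continuousWithinAt) (fun x _ => hd e x)
  obtain ⟨y, hy, hye⟩ := exists_hasDerivAt_eq_slope
    (fun x => inner ℝ (γ x) e) (fun x => inner ℝ (deriv γ x) e) hlt
    (fun x _ => (hd e x).continuousAt.continuousWithinAt) (fun x _ => hd e x)
  have hpos : 0 < inner ℝ (γ (u + a) - γ u) e := by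
    have h1 := he y hy
    rw [hye, add_sub_cancel_left, ← inner_sub_left] at h1
    exact (div_pos_iff_of_pos_right ha).1 h1
  refine ⟨x, hx, ?_⟩
  rw [chordSlope, div_eq_div_iff hpos.ne' (he x hx).ne']
  simp only [← inner_sub_left] at hxe
  linarith

theorem half_le_inner_chord {n : ℕ} {γ : ℝ → EuclideanSpace ℝ (Fin n)}
    (hγ : Differentiable ℝ γ) (e : EuclideanSpace ℝ (Fin n)) {a u : ℝ} (ha : 0 < a)
    (he : ∀ x ∈ Ioo u (u + a), 1 / 2 ≤ inner ℝ (deriv γ x) e) :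
    a / 2 ≤ inner ℝ (γ (u + a) - γ u) e := by
  have hd : ∀ x, HasDerivAt (fun x => inner ℝ (γ x) e) (inner ℝ (deriv γ x) e) x := fun x => by
    simpa using (hγ x).hasDerivAt.inner ℝ (hasDerivAt_const x e)
  obtain ⟨y, hy, hye⟩ := exists_hasDerivAt_eq_slope
    (fun x => inner ℝ (γ x) e) (fun x => inner ℝ (deriv γ x) e) (by linarith : u < u + a)
    (fun x _ => (hd x).continuousAt.continuousWithinAt) (fun x _ => hd x)
  have h1 := he y hy
  rw [hye, add_sub_cancel_left, ← inner_sub_left, le_div_iff₀ ha] at h1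
  linarith

theorem lintegral_weight_le_menger {n : ℕ} {p q α β s t δ : ℝ} (hq : 1 < q) (hp : q + 2 / 3 ≤ p)
    {γ : ℝ → EuclideanSpace ℝ (Fin n)} (hγ : Differentiable ℝ γ)
    (harc : ∀ u, ‖deriv γ u‖ = 1) (e f : EuclideanSpace ℝ (Fin n))
    (he : ‖e‖ = 1) (hf : ‖f‖ = 1) (hα : 0 ≤ α) (hβ : β ≤ 1) (hαs : α ≤ s) (htβ : t + 2 * δ ≤ β)
    (hδ0 : 0 < δ) (hδ : δ ≤ 1 / 2) (hpos : ∀ x ∈ Ioo α β, 1 / 2 ≤ inner ℝ (deriv γ x) e) :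
    ENNReal.ofReal ((8⁻¹ : ℝ) ^ q) *
      ∫⁻ a in Ioo 0 δ, ∫⁻ c in Ioo 0 δ,
        ENNReal.ofReal ((a * c) ^ q / (a * c * (a + c)) ^ (q + 2 / 3)) *
        ∫⁻ u in Ioo s t,
          ENNReal.ofReal (|chordSlope γ e f a u - chordSlope γ e f c (u + a)| ^ q)
      ≤ menger p q γ (deriv γ) := by
  have hlip : ∀ x y, ‖γ y - γ x‖ ≤ |y - x| := fun x y => by
    have := Convex.norm_image_sub_le_of_norm_deriv_le (fun x _ => hγ x)
      (fun x _ => (harc x).le) convex_univ (mem_univ x) (mem_univ y)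
    simpa using this
  have hγm : Measurable γ := hγ.continuous.measurable
  have hwm : Measurable fun x : ℝ × ℝ => ENNReal.ofReal
      ((x.1 * x.2) ^ q / (x.1 * x.2 * (x.1 + x.2)) ^ (q + 2 / 3)) := by fun_prop
  rw [setLIntegral_weight_swap (w := fun a c => ENNReal.ofReal
      ((a * c) ^ q / (a * c * (a + c)) ^ (q + 2 / 3)))
    (g := fun a c u => ENNReal.ofReal
      (|chordSlope γ e f a u - chordSlope γ e f c (u + a)| ^ q)) hwm
    (measurable_chordSlope_sub_rpow hγm e f q), ← lintegral_const_mul' _ _ ENNReal.ofReal_ne_top, menger]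
  refine (setLIntegral_mono' measurableSet_Ioo fun u hu => ?_).trans
    (lintegral_mono_set (fun u hu => ⟨?_, ?_⟩ : Ioo s t ⊆ Ico (0:ℝ) 1))
  rotate_left
  · linarith [hu.1]
  · linarith [hu.2]
  rw [← lintegral_const_mul' _ _ ENNReal.ofReal_ne_top]
  refine le_trans (setLIntegral_mono' measurableSet_Ioo fun a ha => ?_)
    (setLIntegral_translate_le measurableSet_Ioo measurableSet_Ico u
      (fun a ha => ⟨by linarith [hu.1, ha.1], by linarith [hu.2, ha.2, ha.1]⟩) _)
  rw [← lintegral_const_mul' _ _ ENNReal.ofReal_ne_top]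
  refine le_trans (setLIntegral_mono' measurableSet_Ioo fun c hc => ?_)
    (setLIntegral_translate_le measurableSet_Ioo measurableSet_Ico (u + a)
      (fun c hc => ⟨by linarith [hu.1, ha.1, hc.1], by linarith [hu.2, ha.2, hc.2]⟩) _)
  have ha0 := ha.1
  have hc0 := hc.1
  rw [← ENNReal.ofReal_mul (by positivity), ← ENNReal.ofReal_mul (by positivity), harc, harc,
    harc]
  refine ENNReal.ofReal_le_ofReal ?_
  have ha1 := ha.2
  have hc1 := hc.2
  rw [one_mul, one_mul, one_mul, ← mul_assoc]
  refine le_invR hq hp ha0 hc0 ?_ (γ u) (γ (u + a)) (γ (u + a + c)) e f he hf ?_ ?_ ?_ ?_ ?_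
  · have h1 : a * c ≤ 1 * 1 := by gcongr <;> linarith
    have h2 : a * c * (a + c) ≤ 1 * 1 * 1 := by
      gcongr
      linarith
    linarith
  · simpa [abs_of_pos ha0] using hlip u (u + a)
  · simpa [abs_of_pos hc0] using hlip (u + a) (u + a + c)
  · have := hlip u (u + a + c)
    rwa [add_assoc, add_sub_cancel_left, abs_of_pos (by linarith), ← add_assoc] at this
  · exact half_le_inner_chord hγ e ha0 fun x hx =>
      hpos x ⟨by linarith [hu.1, hx.1], by linarith [hu.2, hx.2]⟩
  · exact half_le_inner_chord hγ e hc0 fun x hx =>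
      hpos x ⟨by linarith [hu.1, hx.1], by linarith [hu.2, hx.2]⟩

theorem slope_const_of_menger_ne_top {n : ℕ} {p q α β s t : ℝ} (hq : 1 < q)
    (hp : q + 2 / 3 ≤ p) {γ : ℝ → EuclideanSpace ℝ (Fin n)} (hγ : ContDiff ℝ 1 γ)
    (harc : ∀ u, ‖deriv γ u‖ = 1) (hfin : menger p q γ (deriv γ) ≠ ⊤)
    (e f : EuclideanSpace ℝ (Fin n)) (he : ‖e‖ = 1) (hf : ‖f‖ = 1) (hα : 0 ≤ α) (hβ : β ≤ 1)
    (hαs : α < s) (hst : s < t) (htβ : t < β)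
    (hpos : ∀ x ∈ Ioo α β, 1 / 2 ≤ inner ℝ (deriv γ x) e) :
    (inner ℝ (deriv γ t) f : ℝ) / inner ℝ (deriv γ t) e =
      inner ℝ (deriv γ s) f / inner ℝ (deriv γ s) e := by
  have hdiff : Differentiable ℝ γ := hγ.differentiable one_ne_zero
  have hdc : Continuous (deriv γ) := hγ.continuous_deriv le_rfl
  set μ : ℝ → ℝ := fun x => inner ℝ (deriv γ x) f / inner ℝ (deriv γ x) e with hμ
  by_contra hne
  have hgap : 0 < |μ t - μ s| := abs_pos.2 (sub_ne_zero.2 hne)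
  set η := |μ t - μ s| / 3 with hη
  have hη0 : 0 < η := by positivity
  have hcont : ∀ x ∈ Ioo α β, ContinuousAt μ x := fun x hx => by
    have h0 : (inner ℝ (deriv γ x) e : ℝ) ≠ 0 := by linarith [hpos x hx]
    exact ContinuousAt.div (by fun_prop) (by fun_prop) h0
  obtain ⟨r₁, hr₁, hs⟩ := Metric.continuousAt_iff.1 (hcont s ⟨hαs, hst.trans htβ⟩) η hη0
  obtain ⟨r₂, hr₂, ht⟩ := Metric.continuousAt_iff.1 (hcont t ⟨hαs.trans hst, htβ⟩) η hη0
  obtain ⟨r, hr, hrle⟩ : ∃ r > 0, r ≤ r₁ ∧ r ≤ r₂ ∧ r ≤ β - t ∧ r ≤ t - s ∧ r ≤ 1 :=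
    ⟨min r₁ (min r₂ (min (β - t) (min (t - s) 1))),
      by simp [hr₁, hr₂, hst, htβ],
      by simp⟩
  obtain ⟨hrr₁, hrr₂, hrβ, hrst, hr1⟩ := hrle
  have hmv : ∀ a ∈ Ioo 0 (r / 8), ∀ u ∈ Ioo α (t + r / 2), ∃ x ∈ Ioo u (u + a),
      chordSlope γ e f a u = μ x := fun a ha u hu =>
    exists_chordSlope_eq hdiff e f ha.1 fun x hx => by
      linarith [hpos x ⟨hu.1.trans hx.1, by linarith [hx.2, hu.2, ha.2]⟩]
  have hγm : Measurable γ := hdiff.continuous.measurable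
  obtain ⟨C, hC, hlow⟩ := lintegral_slope_lower_bound hq hst hr hη0 (chordSlope γ e f)
    (measurable_chordSlope hγm e f) (by
    intro a ha u hu v hv
    obtain ⟨x, hx, hux⟩ := hmv a ha u ⟨by linarith [hu.1], by linarith [hu.2]⟩
    obtain ⟨y, hy, hvy⟩ := hmv a ha v ⟨by linarith [hv.1], by linarith [hv.2]⟩
    have h1 := hs (x := x) (by
      rw [Real.dist_eq, abs_lt]
      constructor <;> linarith [hx.1, hx.2, hu.1, hu.2, ha.2])
    have h2 := ht (x := y) (by
      rw [Real.dist_eq, abs_lt]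
      constructor <;> linarith [hy.1, hy.2, hv.1, hv.2, ha.2])
    rw [Real.dist_eq] at h1 h2
    rw [hux, hvy]
    have h3 : |μ t - μ s| ≤ |μ y - μ t| + |μ y - μ x| + |μ x - μ s| := by
      have e1 := abs_sub_le (μ t) (μ y) (μ s)
      have e2 := abs_sub_le (μ y) (μ x) (μ s)
      rw [abs_sub_comm (μ t) (μ y)] at e1
      linarith
    linarith)
  have hHm : Measurable (Function.uncurry fun a c => ∫⁻ u in Ioo s (t + r / 2),
      ENNReal.ofReal (|chordSlope γ e f a u - chordSlope γ e f c (u + a)| ^ q)) :=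
    Measurable.lintegral_prod_right' (measurable_chordSlope_sub_rpow hγm e f q)
  have htop := lintegral_weight_eq_top hC (by positivity : 0 < r / 8) _ hHm hlow
  have hle := lintegral_weight_le_menger (s := s) (t := t + r / 2) (δ := r / 8) hq hp hdiff harc
    e f he hf hα hβ hαs.le (by linarith) (by positivity) (by linarith) hpos
  rw [htop, ENNReal.mul_top (by simp [Real.rpow_pos_of_pos])] at hle
  exact hfin (top_le_iff.1 hle)

theorem deriv_eventuallyEq_of_menger_ne_top {n : ℕ} {p q : ℝ} (hq : 1 < q)
    (hp : q + 2 / 3 ≤ p) {γ : ℝ → EuclideanSpace ℝ (Fin n)} (hγ : ContDiff ℝ 1 γ)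
    (harc : ∀ u, ‖deriv γ u‖ = 1) (hfin : menger p q γ (deriv γ) ≠ ⊤)
    {x : ℝ} (hx : x ∈ Ioo (0:ℝ) 1) : deriv γ =ᶠ[𝓝 x] fun _ => deriv γ x := by
  have hdc : Continuous (deriv γ) := hγ.continuous_deriv le_rfl
  set e := deriv γ x with he
  have hee : (inner ℝ e e : ℝ) = 1 := by rw [real_inner_self_eq_norm_sq, harc]; norm_num
  have hev : ∀ᶠ y in 𝓝 x, (1 / 2 : ℝ) < inner ℝ (deriv γ y) e := by
    have hc : ContinuousAt (fun y => (inner ℝ (deriv γ y) e : ℝ)) x := by fun_prop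
    refine hc.eventually_const_lt ?_
    change 1 / 2 < (inner ℝ e e : ℝ)
    rw [hee]
    norm_num
  obtain ⟨r, hr, hball⟩ := Metric.eventually_nhds_iff_ball.1 hev
  rw [Real.ball_eq_Ioo] at hball
  have hmem : Ioo (max 0 (x - r)) (min 1 (x + r)) ∈ 𝓝 x :=
    Ioo_mem_nhds (max_lt hx.1 (by linarith)) (lt_min hx.2 (by linarith))
  have hpos : ∀ y ∈ Ioo (max 0 (x - r)) (min 1 (x + r)), (1 / 2 : ℝ) ≤ inner ℝ (deriv γ y) e :=
    fun y hy => (hball y ⟨(le_max_right _ _).trans_lt hy.1, hy.2.trans_le (min_le_right _ _)⟩).le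
  have hx' := mem_of_mem_nhds hmem
  filter_upwards [hmem] with y hy
  have key : (inner ℝ (deriv γ y) (deriv γ y) : ℝ) / inner ℝ (deriv γ y) e =
      inner ℝ e (deriv γ y) / inner ℝ e e := by
    rcases lt_trichotomy y x with h | h | h
    · exact (slope_const_of_menger_ne_top hq hp hγ harc hfin e (deriv γ y) (harc x) (harc y)
        (le_max_left _ _) (min_le_left _ _) hy.1 h hx'.2 hpos).symm
    · rw [h]
    · exact slope_const_of_menger_ne_top hq hp hγ harc hfin e (deriv γ y) (harc x) (harc y)
        (le_max_left _ _) (min_le_left _ _) hx'.1 h hy.2 hpos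
  have hi := hpos y hy
  rw [hee, div_one, real_inner_self_eq_norm_sq, harc,
    real_inner_comm (deriv γ y) e, div_eq_iff (by linarith)] at key
  refine (inner_eq_one_iff_of_norm_eq_one (𝕜 := ℝ) (harc y) (harc x)).1 ?_
  rw [← he]
  nlinarith

/-- **Singular energies.** For `q > 1` and `p ≥ q + 2/3`, every injective
arc-length parametrized closed `C¹` curve has infinite energy: there are no
closed finite-energy `C¹` knots at all in this parameter range. -/
theorem no_finite_energy_C1_knots (n : ℕ) (p q : ℝ)
    (hq : 1 < q) (hp : q + 2/3 ≤ p)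
    (γ : ℝ → EuclideanSpace ℝ (Fin n))
    (hC1 : ContDiff ℝ 1 γ) (hper : Function.Periodic γ 1)
    (hinj : InjCircle γ) (harc : ∀ u, ‖deriv γ u‖ = 1) :
    menger p q γ (deriv γ) = ⊤ := by
  by_contra hfin
  have hdc : Continuous (deriv γ) := hC1.continuous_deriv le_rfl
  have hd : ∀ x ∈ Ioo (0:ℝ) 1, HasDerivAt (deriv γ) 0 x := fun x hx =>
    (hasDerivAt_const x (deriv γ x)).congr_of_eventuallyEq
      (deriv_eventuallyEq_of_menger_ne_top hq hp hC1 harc hfin hx)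
  set v := deriv γ (1 / 2) with hv
  have hconst : ∀ x ∈ Ioo (0:ℝ) 1, deriv γ x = v := fun x hx =>
    isOpen_Ioo.is_const_of_deriv_eq_zero isPreconnected_Ioo
      (fun y hy => (hd y hy).differentiableAt.differentiableWithinAt)
      (fun y hy => (hd y hy).deriv) hx (by norm_num)
  have hint : ∫ x in (0:ℝ)..1, deriv γ x = γ 1 - γ 0 :=
    intervalIntegral.integral_deriv_eq_sub
      (fun x _ => hC1.differentiable one_ne_zero x) (hdc.intervalIntegrable _ _)
  have hint' : ∫ x in (0:ℝ)..1, deriv γ x = v := by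
    rw [intervalIntegral.integral_of_le zero_le_one, integral_Ioc_eq_integral_Ioo,
      setIntegral_congr_fun measurableSet_Ioo hconst]
    simp
  have h10 : γ 1 = γ 0 := by simpa using hper 0
  have hv1 : ‖v‖ = 1 := harc _
  rw [← hint', hint, h10, sub_self, norm_zero] at hv1
  exact zero_ne_one hv1
end
end

section
/- Let p, q > 0 with p ≥ q + 2/3. Then every closed curve γ ∈ C³(ℝ/ℤ,ℝⁿ) parametrized by arc-length satisfies E_{p,q}(γ) = ∞; that is, there are no closed finite-energy C³ curves in this parameter range. -/
open MeasureTheory Set Filter Topology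
open scoped ENNReal

noncomputable section

section PlanarProjection

variable {E : Type*} [NormedAddCommGroup E] [InnerProductSpace ℝ E]

/-- The Gram determinant of `a, b` and a unit vector `T` is nonnegative. -/
theorem norm_sq_inner_smul_sub_le (a b T : E) (hT : ‖T‖ = 1) :
    ‖inner ℝ a T • b - inner ℝ b T • a‖ ^ 2 ≤
      ‖a‖ ^ 2 * ‖b‖ ^ 2 - (inner ℝ a b : ℝ) ^ 2 := by
  have hTT : (inner ℝ T T : ℝ) = 1 := by rw [real_inner_self_eq_norm_sq, hT, one_pow]
  have h := real_inner_mul_inner_self_le (a - (inner ℝ a T : ℝ) • T) (b - (inner ℝ b T : ℝ) • T)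
  simp only [← real_inner_self_eq_norm_sq]
  simp only [inner_sub_left, inner_sub_right, real_inner_smul_left, real_inner_smul_right,
    hTT, real_inner_comm a T, real_inner_comm b T, real_inner_comm a b] at h ⊢
  nlinarith [h]

/-- The coordinate determinant of `a, b` with respect to a unit vector `T` and a vector `N`
is bounded by the area of the parallelogram spanned by `a, b`. -/
theorem sq_det_inner_le (a b T N : E) (hT : ‖T‖ = 1) :
    ((inner ℝ a T : ℝ) * inner ℝ b N - inner ℝ a N * inner ℝ b T) ^ 2 ≤
      ‖N‖ ^ 2 * (‖a‖ ^ 2 * ‖b‖ ^ 2 - (inner ℝ a b : ℝ) ^ 2) := by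
  have h := norm_sq_inner_smul_sub_le a b T hT
  have hN := abs_real_inner_le_norm ((inner ℝ a T : ℝ) • b - (inner ℝ b T : ℝ) • a) N
  have hdet : (inner ℝ ((inner ℝ a T : ℝ) • b - (inner ℝ b T : ℝ) • a) N : ℝ) =
      inner ℝ a T * inner ℝ b N - inner ℝ a N * inner ℝ b T := by
    rw [inner_sub_left, real_inner_smul_left, real_inner_smul_left]; ring
  rw [hdet] at hN
  calc _ ≤ (‖(inner ℝ a T : ℝ) • b - (inner ℝ b T : ℝ) • a‖ * ‖N‖) ^ 2 :=
        sq_le_sq' (neg_le_of_abs_le hN) (le_of_abs_le hN)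
    _ = ‖N‖ ^ 2 * ‖(inner ℝ a T : ℝ) • b - (inner ℝ b T : ℝ) • a‖ ^ 2 := by ring
    _ ≤ _ := by gcongr

end PlanarProjection

theorem abs_det_inner_le_wedgeNorm {n : ℕ} (a b T N : EuclideanSpace ℝ (Fin n))
    (hT : ‖T‖ = 1) :
    |(inner ℝ a T : ℝ) * inner ℝ b N - inner ℝ a N * inner ℝ b T| ≤ ‖N‖ * wedgeNorm a b := by
  rw [← Real.sqrt_sq_eq_abs, wedgeNorm]
  refine (Real.sqrt_le_sqrt (sq_det_inner_le a b T N hT)).trans_eq ?_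
  rw [Real.sqrt_mul (sq_nonneg _), Real.sqrt_sq (norm_nonneg _)]

/-- A function with second derivative at least `2 * c` on an interval which vanishes at `u < v`
dominates `c * (w - u) * (w - v)` to the right of `v`. -/
theorem mul_sub_mul_sub_le_of_deriv2_ge {φ φ' φ'' : ℝ → ℝ} {x y u v w c : ℝ}
    (hφ : ∀ t, HasDerivAt φ (φ' t) t) (hφ' : ∀ t, HasDerivAt φ' (φ'' t) t)
    (hc : ∀ t ∈ Ioo x y, 2 * c ≤ φ'' t) (hu : φ u = 0) (hv : φ v = 0)
    (hxu : x < u) (huv : u < v) (hvw : v < w) (hwy : w < y) :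
    c * (w - u) * (w - v) ≤ φ w := by
  set ψ : ℝ → ℝ := fun t => φ t - c * (t - u) * (t - v) with hψ
  have h1 : ∀ t, HasDerivAt ψ (φ' t - c * ((t - u) + (t - v))) t := by
    intro t
    refine ((hφ t).sub ((((hasDerivAt_id t).sub_const u).const_mul c).mul
      ((hasDerivAt_id t).sub_const v))).congr_deriv ?_
    simp only [id_eq]
    ring
  have h2 : ∀ t, HasDerivAt (fun t => φ' t - c * ((t - u) + (t - v))) (φ'' t - 2 * c) t := by
    intro t
    refine ((hφ' t).sub ((((hasDerivAt_id t).sub_const u).add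
      ((hasDerivAt_id t).sub_const v)).const_mul c)).congr_deriv ?_
    ring
  have hconv : ConvexOn ℝ (Ioo x y) ψ := by
    refine convexOn_of_hasDerivWithinAt2_nonneg (convex_Ioo x y)
      (fun t _ => (h1 t).continuousAt.continuousWithinAt)
      (fun t _ => (h1 t).hasDerivWithinAt) (fun t _ => (h2 t).hasDerivWithinAt) ?_
    intro t ht
    rw [interior_Ioo] at ht
    linarith [hc t ht]
  have h3 := hconv.slope_mono_adjacent (x := u) (y := v) (z := w) ⟨hxu, by linarith⟩
    ⟨by linarith, hwy⟩ huv hvw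
  have hψu : ψ u = 0 := by simp [hψ, hu]
  have hψv : ψ v = 0 := by simp [hψ, hv]
  rw [hψu, hψv, sub_zero, zero_div, sub_zero] at h3
  have h4 : 0 ≤ ψ w := by
    by_contra! h
    exact absurd (div_neg_of_neg_of_pos h (sub_pos.2 hvw)) (not_lt.2 h3)
  simp only [hψ] at h4
  linarith

/-- A closed curve of class `C²` with unit speed has a point of nonzero curvature. -/
theorem exists_deriv2_ne_zero_of_periodic {n : ℕ} {γ : ℝ → EuclideanSpace ℝ (Fin n)}
    (hC2 : ContDiff ℝ 2 γ) (hper : Function.Periodic γ 1) (harc : ∀ u, ‖deriv γ u‖ = 1) :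
    ∃ u ∈ Ioo (0 : ℝ) 1, deriv (deriv γ) u ≠ 0 := by
  by_contra! h
  have hd : Differentiable ℝ γ := hC2.differentiable (by norm_num)
  have hC1 : ContDiff ℝ 1 (deriv γ) := ((contDiff_succ_iff_deriv (n := 1)).1 hC2).2.2
  have hd' : Differentiable ℝ (deriv γ) := hC1.differentiable (by norm_num)
  have hconst : ∀ x ∈ Icc (0 : ℝ) 1, deriv γ x = deriv γ 0 := by
    intro x hx
    refine constant_of_has_deriv_right_zero hd'.continuous.continuousOn (fun y hy => ?_) x hx
    have hy0 : deriv (deriv γ) y = 0 := by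
      have hcl : IsClosed {t | deriv (deriv γ) t = 0} :=
        isClosed_eq (hC1.continuous_deriv le_rfl) continuous_const
      have : closure (Ioo (0 : ℝ) 1) ⊆ {t | deriv (deriv γ) t = 0} := hcl.closure_subset_iff.2 h
      rw [closure_Ioo zero_ne_one] at this
      exact this (Ico_subset_Icc_self hy)
    have := (hd' y).hasDerivAt
    rw [hy0] at this
    exact this.hasDerivWithinAt
  have hlin := constant_of_has_deriv_right_zero (f := fun t => γ t - t • deriv γ 0)
    (a := 0) (b := 1) (by have := hd.continuous; fun_prop) (fun y hy => by
      have := (hd y).hasDerivAt.sub ((hasDerivAt_id y).smul_const (deriv γ 0))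
      rw [hconst y (Ico_subset_Icc_self hy), one_smul, sub_self] at this
      exact this.hasDerivWithinAt) 1 (right_mem_Icc.2 zero_le_one)
  have h01 : γ 1 = γ 0 := by simpa using hper 0
  have hz : deriv γ 0 = 0 := by simpa [h01] using hlin
  simpa [hz] using harc 0

/-- Near a point of nonzero curvature of a unit-speed `C²` curve, the area of a triangle inscribed
in the curve is comparable to the product of the differences of the parameters. -/
theorem exists_mul_le_wedgeNorm {n : ℕ} {γ : ℝ → EuclideanSpace ℝ (Fin n)}
    (hC2 : ContDiff ℝ 2 γ) (harc : ∀ u, ‖deriv γ u‖ = 1) {u₀ : ℝ}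
    (hu₀ : deriv (deriv γ) u₀ ≠ 0) :
    ∃ c > 0, ∃ r > 0, ∀ u v w, u₀ - r < u → u < v → v < w → w < u₀ + r →
      c * ((v - u) * (w - u) * (w - v)) ≤ wedgeNorm (γ v - γ u) (γ w - γ u) := by
  have hd : Differentiable ℝ γ := hC2.differentiable (by norm_num)
  have hC1 : ContDiff ℝ 1 (deriv γ) := ((contDiff_succ_iff_deriv (n := 1)).1 hC2).2.2
  have hd' : Differentiable ℝ (deriv γ) := hC1.differentiable (by norm_num)
  have hcont' : Continuous (deriv γ) := hd'.continuous
  have hcont'' : Continuous (deriv (deriv γ)) := hC1.continuous_deriv le_rfl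
  set T := deriv γ u₀ with hTdef
  set N := deriv (deriv γ) u₀ with hNdef
  have hT : ‖T‖ = 1 := harc u₀
  have hN : 0 < ‖N‖ := norm_pos_iff.2 hu₀
  have hTN : (inner ℝ T N : ℝ) = 0 := by
    have h1 := (hd' u₀).hasDerivAt.inner ℝ (hd' u₀).hasDerivAt
    have h2 : (fun t => (inner ℝ (deriv γ t) (deriv γ t) : ℝ)) = fun _ => 1 := by
      funext t; rw [real_inner_self_eq_norm_sq, harc, one_pow]
    rw [h2] at h1
    have h3 := h1.unique (hasDerivAt_const u₀ (1 : ℝ))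
    rw [← hTdef, ← hNdef, real_inner_comm T N] at h3
    linarith
  have hproj : ∀ (e : EuclideanSpace ℝ (Fin n)) t,
      HasDerivAt (fun t => (inner ℝ (γ t) e : ℝ)) (inner ℝ (deriv γ t) e) t := by
    intro e t
    simpa using (hd t).hasDerivAt.inner ℝ (hasDerivAt_const t e)
  have hproj' : ∀ (e : EuclideanSpace ℝ (Fin n)) t,
      HasDerivAt (fun t => (inner ℝ (deriv γ t) e : ℝ)) (inner ℝ (deriv (deriv γ) t) e) t := by
    intro e t
    simpa using (hd' t).hasDerivAt.inner ℝ (hasDerivAt_const t e)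
  set K := ‖N‖ ^ 2 with hK
  have hKpos : 0 < K := by positivity
  have ev : ∀ᶠ t in 𝓝 u₀, (1 / 2 < (inner ℝ (deriv γ t) T : ℝ)) ∧
      |(inner ℝ (deriv γ t) N : ℝ)| < K / 8 ∧ |(inner ℝ (deriv (deriv γ) t) T : ℝ)| < 1 ∧
      K / 2 < (inner ℝ (deriv (deriv γ) t) N : ℝ) := by
    refine Eventually.and ?_ (Eventually.and ?_ (Eventually.and ?_ ?_))
    · refine Tendsto.eventually_const_lt ?_ (Continuous.tendsto (by fun_prop) u₀)
      rw [← hTdef, real_inner_self_eq_norm_sq, hT]; norm_num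
    · refine Tendsto.eventually_lt_const ?_ (Continuous.tendsto (by fun_prop) u₀)
      rw [← hTdef, hTN, abs_zero]; positivity
    · refine Tendsto.eventually_lt_const ?_ (Continuous.tendsto (by fun_prop) u₀)
      rw [← hNdef, real_inner_comm, hTN, abs_zero]; norm_num
    · refine Tendsto.eventually_const_lt ?_ (Continuous.tendsto (by fun_prop) u₀)
      rw [← hNdef, real_inner_self_eq_norm_sq]; linarith
  obtain ⟨r, hr, hball⟩ := Metric.eventually_nhds_iff_ball.1 ev
  rw [Real.ball_eq_Ioo] at hball
  refine ⟨‖N‖ / 16, by positivity, r, hr, fun u v w hu huv hvw hw => ?_⟩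
  have hseg : Icc u v ⊆ Ioo (u₀ - r) (u₀ + r) :=
    fun t ht => ⟨by linarith [ht.1], by linarith [ht.2]⟩
  have hf : 1 / 2 * (v - u) ≤ (inner ℝ (γ v) T : ℝ) - inner ℝ (γ u) T := by
    refine (convex_Icc u v).mul_sub_le_image_sub_of_le_deriv
      (f := fun t => (inner ℝ (γ t) T : ℝ))
      (fun t _ => (hproj T t).continuousAt.continuousWithinAt)
      (fun t _ => (hproj T t).differentiableAt.differentiableWithinAt) (fun t ht => ?_)
      u (left_mem_Icc.2 huv.le) v (right_mem_Icc.2 huv.le) huv.le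
    rw [(hproj T t).deriv]
    exact (hball t (hseg (interior_subset ht))).1.le
  have hg : |(inner ℝ (γ v) N : ℝ) - inner ℝ (γ u) N| ≤ K / 8 * (v - u) := by
    have := (convex_Icc u v).norm_image_sub_le_of_norm_hasDerivWithin_le
      (f := fun t => (inner ℝ (γ t) N : ℝ)) (fun t _ => (hproj N t).hasDerivWithinAt)
      (fun t ht => (hball t (hseg ht)).2.1.le) (left_mem_Icc.2 huv.le) (right_mem_Icc.2 huv.le)
    simpa [Real.norm_eq_abs, abs_of_pos (sub_pos.2 huv)] using this
  set F := (inner ℝ (γ v) T : ℝ) - inner ℝ (γ u) T with hF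
  set G := (inner ℝ (γ v) N : ℝ) - inner ℝ (γ u) N with hG
  have key := mul_sub_mul_sub_le_of_deriv2_ge (x := u₀ - r) (y := u₀ + r)
    (u := u) (v := v) (w := w)
    (c := K / 16 * (v - u))
    (fun t => (((hproj N t).sub_const (inner ℝ (γ u) N)).const_mul F).sub
      (((hproj T t).sub_const (inner ℝ (γ u) T)).const_mul G))
    (fun t => ((hproj' N t).const_mul F).sub ((hproj' T t).const_mul G))
    (fun t ht => by
      obtain ⟨-, -, h3, h4⟩ := hball t ht
      have hGT : G * (inner ℝ (deriv (deriv γ) t) T : ℝ) ≤ K / 8 * (v - u) * 1 := by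
        refine (le_abs_self _).trans ?_
        rw [abs_mul]
        exact mul_le_mul hg h3.le (abs_nonneg _) (by have := sub_pos.2 huv; positivity)
      have hFN : 1 / 2 * (v - u) * (K / 2) ≤ F * (inner ℝ (deriv (deriv γ) t) N : ℝ) :=
        mul_le_mul hf h4.le (by positivity) (le_trans (by have := sub_pos.2 huv; positivity) hf)
      have := mul_pos hKpos (sub_pos.2 huv)
      linarith)
    (by simp) (by simp [← hF, ← hG]; ring) hu huv hvw hw
  have hwedge := (le_abs_self _).trans
    (abs_det_inner_le_wedgeNorm (γ v - γ u) (γ w - γ u) T N hT)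
  simp only [inner_sub_left, ← hF, ← hG] at hwedge
  have hfin := key.trans hwedge
  rw [hK] at hfin
  refine le_of_mul_le_mul_left ?_ hN
  calc _ = ‖N‖ ^ 2 / 16 * (v - u) * (w - u) * (w - v) := by ring
    _ ≤ _ := hfin

/-- If the area of a triangle is at least `c * P` and the product of its side lengths is at most
`P ≤ 1`, then `1 / R^{p,q}` is at least `c ^ q * P ^ (-2/3)` in the range `q + 2/3 ≤ p`. -/
theorem le_invR_of_mul_le_wedgeNorm {n : ℕ} {p q c P : ℝ} {x y z : EuclideanSpace ℝ (Fin n)}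
    (hp0 : 0 < p) (hq0 : 0 < q) (hp : q + 2 / 3 ≤ p) (hc : 0 < c) (hP : 0 < P) (hP1 : P ≤ 1)
    (hw : c * P ≤ wedgeNorm (y - x) (z - x)) (hpos : 0 < ‖y - z‖ * ‖y - x‖ * ‖z - x‖)
    (hle : ‖y - z‖ * ‖y - x‖ * ‖z - x‖ ≤ P) :
    c ^ q * P ^ (-(2 / 3) : ℝ) ≤ invR p q x y z := by
  calc c ^ q * P ^ (-(2 / 3) : ℝ) ≤ c ^ q * P ^ (q - p) := by
        gcongr 1
        exact Real.rpow_le_rpow_of_exponent_ge hP hP1 (by linarith)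
    _ = (c * P) ^ q / P ^ p := by
        rw [Real.rpow_sub hP, Real.mul_rpow hc.le hP.le, mul_div_assoc]
    _ ≤ invR p q x y z := by
        have : 0 ≤ wedgeNorm (y - x) (z - x) := Real.sqrt_nonneg _
        unfold invR
        gcongr

theorem lintegral_Ioo_const_div_sub_eq_top {u b C : ℝ} (hub : u < b) (hC : 0 < C) :
    ∫⁻ v in Ioo u b, ENNReal.ofReal (C / (v - u)) = ⊤ := by
  by_contra h
  have hint : IntegrableOn (fun v => C / (v - u)) (Ioo u b) := by
    refine ⟨Measurable.aestronglyMeasurable (by fun_prop), ?_⟩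
    rw [hasFiniteIntegral_iff_ofReal]
    · exact lt_top_iff_ne_top.2 h
    · filter_upwards [ae_restrict_mem measurableSet_Ioo] with v hv
      exact (div_pos hC (sub_pos.2 hv.1)).le
  have hint' : IntervalIntegrable (fun v => (v - u)⁻¹) volume u b := by
    rw [intervalIntegrable_iff_integrableOn_Ioo_of_le hub.le]
    have := hint.const_mul C⁻¹
    refine this.congr (Eventually.of_forall fun v => ?_)
    simp only
    field_simp
  rw [intervalIntegrable_sub_inv_iff] at hint'
  rcases hint' with h | h
  · exact hub.ne h
  · exact h left_mem_uIcc

/-- **No finite-energy `C³` curves for `p ≥ q + 2/3`.** For `p, q > 0` with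
`p ≥ q + 2/3`, every closed arc-length parametrized `C³` curve satisfies
`E_{p,q}(γ) = ∞`. -/
theorem no_finite_energy_C3_curves (n : ℕ) (p q : ℝ)
    (hp0 : 0 < p) (hq0 : 0 < q) (hp : q + 2/3 ≤ p)
    (γ : ℝ → EuclideanSpace ℝ (Fin n))
    (hC3 : ContDiff ℝ 3 γ) (hper : Function.Periodic γ 1)
    (harc : ∀ u, ‖deriv γ u‖ = 1) :
    menger p q γ (deriv γ) = ⊤ := by
  have hC2 : ContDiff ℝ 2 γ := hC3.of_le (by norm_num)
  obtain ⟨u₀, ⟨h0, h1⟩, hcurv⟩ := exists_deriv2_ne_zero_of_periodic hC2 hper harc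
  obtain ⟨c, hc, r₁, hr₁, hwedge⟩ := exists_mul_le_wedgeNorm hC2 harc hcurv
  obtain ⟨r, hr, hrr₁, hr0, hr1⟩ : ∃ r > 0, r ≤ r₁ ∧ r ≤ u₀ ∧ r ≤ 1 - u₀ :=
    ⟨min r₁ (min u₀ (1 - u₀)), by simp [hr₁, h0, h1], by simp, by simp, by simp⟩
  have hlip : ∀ s t, ‖γ s - γ t‖ ≤ |s - t| := by
    intro s t
    have := convex_univ.norm_image_sub_le_of_norm_deriv_le (f := γ) (C := 1) (x := t) (y := s)
      (fun x _ => (hC2.differentiable (by norm_num)) x) (fun x _ => (harc x).le)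
      (mem_univ _) (mem_univ _)
    simpa using this
  have hwedge_pos : ∀ a b : EuclideanSpace ℝ (Fin n), 0 < wedgeNorm a b →
      0 < ‖b - a‖ * ‖a‖ * ‖b‖ := by
    intro a b hab
    rw [wedgeNorm, Real.sqrt_pos] at hab
    have ha : a ≠ 0 := by rintro rfl; simp at hab
    have hb : b ≠ 0 := by rintro rfl; simp at hab
    have hba : b ≠ a := by
      rintro rfl
      rw [real_inner_self_eq_norm_sq] at hab
      nlinarith
    have := norm_pos_iff.2 ha
    have := norm_pos_iff.2 hb
    have := norm_pos_iff.2 (sub_ne_zero.2 hba)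
    positivity
  have hbound : ∀ u v w, u₀ - r < u → u < v → v < w → w < 2 * v - u → w < u₀ + r →
      c ^ q / 2 / (v - u) ^ 2 ≤ invR p q (γ u) (γ v) (γ w) := by
    intro u v w hu huv hvw hwv hw
    have hs : 0 < v - u := sub_pos.2 huv
    have hws : 0 < w - u := by linarith
    have hwv0 : 0 < w - v := by linarith
    have hP : 0 < (v - u) * (w - u) * (w - v) := by positivity
    have hP2 : (v - u) * (w - u) * (w - v) ≤ 2 * (v - u) ^ 3 := by
      calc _ ≤ (v - u) * (2 * (v - u)) * (v - u) :=
            mul_le_mul (mul_le_mul_of_nonneg_left (by linarith) hs.le) (by linarith) hwv0.le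
              (by positivity)
        _ = _ := by ring
    have hP1 : (v - u) * (w - u) * (w - v) ≤ 1 := by
      have h1 : (v - u) * (w - u) ≤ 1 := mul_le_one₀ (by linarith) hws.le (by linarith)
      exact mul_le_one₀ h1 hwv0.le (by linarith)
    have hwd := hwedge u v w (by linarith) huv hvw (by linarith)
    have hpos := hwedge_pos _ _ ((by positivity : (0 : ℝ) < _).trans_le hwd)
    rw [sub_sub_sub_cancel_right, norm_sub_rev (γ w) (γ v)] at hpos
    refine le_trans ?_ (le_invR_of_mul_le_wedgeNorm hp0 hq0 hp hc hP hP1 hwd hpos ?_)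
    · rw [div_div, div_eq_mul_inv]
      gcongr
      calc (2 * (v - u) ^ 2)⁻¹ ≤ (2 * (v - u) ^ 3) ^ (-(2 / 3) : ℝ) := by
            rw [Real.rpow_neg (by positivity), Real.mul_rpow (by norm_num) (by positivity),
              ← Real.rpow_natCast (v - u) 3, ← Real.rpow_mul hs.le,
              ← Real.rpow_natCast (v - u) 2]
            norm_num only [Nat.cast_ofNat]
            gcongr
            calc (2 : ℝ) ^ (2 / 3 : ℝ) ≤ 2 ^ (1 : ℝ) :=
                  Real.rpow_le_rpow_of_exponent_le (by norm_num) (by norm_num)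
              _ = 2 := Real.rpow_one 2
        _ ≤ _ := Real.rpow_le_rpow_of_nonpos hP hP2 (by norm_num)
    · have e1 := hlip v w
      have e2 := hlip v u
      have e3 := hlip w u
      rw [abs_sub_comm, abs_of_pos hwv0] at e1
      rw [abs_of_pos hs] at e2
      rw [abs_of_pos hws] at e3
      calc _ ≤ (w - v) * (v - u) * (w - u) := by gcongr
        _ = _ := by ring
  have hC : 0 < c ^ q / 2 := by positivity
  have hinner : ∀ u v, u₀ - r < u → u < u₀ → u < v → v < u + r / 2 →
      ENNReal.ofReal (c ^ q / 2 / (v - u)) ≤ ∫⁻ w in Ico (0 : ℝ) 1,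
        ENNReal.ofReal (‖deriv γ u‖ * ‖deriv γ v‖ * ‖deriv γ w‖ *
          invR p q (γ u) (γ v) (γ w)) := by
    intro u v hu hu' huv hv
    have hs : 0 < v - u := sub_pos.2 huv
    calc ENNReal.ofReal (c ^ q / 2 / (v - u))
        = ∫⁻ _ in Ioo v (2 * v - u), ENNReal.ofReal (c ^ q / 2 / (v - u) ^ 2) := by
          rw [setLIntegral_const, Real.volume_Ioo, ← ENNReal.ofReal_mul (by positivity)]
          congr 1
          field_simp
          ring
      _ ≤ ∫⁻ w in Ioo v (2 * v - u), ENNReal.ofReal (‖deriv γ u‖ * ‖deriv γ v‖ * ‖deriv γ w‖ *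
          invR p q (γ u) (γ v) (γ w)) := by
          refine setLIntegral_mono' measurableSet_Ioo fun w hw => ENNReal.ofReal_le_ofReal ?_
          simpa [harc] using hbound u v w hu huv hw.1 hw.2 (by linarith [hw.2])
      _ ≤ _ := by
          refine lintegral_mono_set fun w hw => ?_
          exact ⟨by linarith [hw.1], by linarith [hw.2]⟩
  rw [menger, eq_top_iff]
  calc (⊤ : ℝ≥0∞) = ∫⁻ _ in Ioo (u₀ - r) u₀, ⊤ := by
        rw [setLIntegral_const, Real.volume_Ioo, ENNReal.top_mul]
        simpa using hr
    _ ≤ ∫⁻ u in Ioo (u₀ - r) u₀, ∫⁻ v in Ico (0 : ℝ) 1, ∫⁻ w in Ico (0 : ℝ) 1,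
        ENNReal.ofReal (‖deriv γ u‖ * ‖deriv γ v‖ * ‖deriv γ w‖ *
          invR p q (γ u) (γ v) (γ w)) := by
        refine setLIntegral_mono' measurableSet_Ioo fun u hu => ?_
        rw [← lintegral_Ioo_const_div_sub_eq_top (u := u) (b := u + r / 2) (by linarith) hC]
        refine (setLIntegral_mono' measurableSet_Ioo fun v hv =>
          hinner u v hu.1 hu.2 hv.1 hv.2).trans (lintegral_mono_set fun v hv => ?_)
        exact ⟨by linarith [hv.1, hu.1], by linarith [hv.2, hu.2]⟩
    _ ≤ _ := by
        refine lintegral_mono_set fun u hu => ?_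
        exact ⟨by linarith [hu.1], by linarith [hu.2]⟩
end
end

section
/- Let p, q > 0 and let γ_k, γ ∈ C¹(ℝ/ℤ,ℝⁿ) be injective regular curves such that γ_k → γ in C¹(ℝ/ℤ,ℝⁿ). Then E_{p,q} is lower semi-continuous along this sequence: E_{p,q}(γ) ≤ liminf_{k→∞} E_{p,q}(γ_k). -/
open MeasureTheory Set Filter Topology
open scoped ENNReal

noncomputable section

/-- Fatou's lemma for a threefold iterated integral. -/
theorem lintegral_lintegral_lintegral_le_liminf {α : Type*} [MeasurableSpace α] (μ : Measure α)
    [SFinite μ] (F : ℕ → α × α × α → ℝ≥0∞) (G : α × α × α → ℝ≥0∞)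
    (hF : ∀ k, Measurable (F k)) (hG : ∀ x, G x ≤ liminf (fun k => F k x) atTop) :
    ∫⁻ a, ∫⁻ b, ∫⁻ c, G (a, b, c) ∂μ ∂μ ∂μ ≤
      liminf (fun k => ∫⁻ a, ∫⁻ b, ∫⁻ c, F k (a, b, c) ∂μ ∂μ ∂μ) atTop := by
  have hmeas_inner : ∀ k, Measurable fun x : α × α => ∫⁻ c, F k (x.1, x.2, c) ∂μ := fun k =>
    Measurable.lintegral_prod_right' (f := fun y : (α × α) × α => F k (y.1.1, y.1.2, y.2))
      ((hF k).comp (by fun_prop))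
  calc ∫⁻ a, ∫⁻ b, ∫⁻ c, G (a, b, c) ∂μ ∂μ ∂μ
      ≤ ∫⁻ a, ∫⁻ b, ∫⁻ c, liminf (fun k => F k (a, b, c)) atTop ∂μ ∂μ ∂μ :=
        lintegral_mono fun a => lintegral_mono fun b => lintegral_mono fun c => hG _
    _ ≤ ∫⁻ a, ∫⁻ b, liminf (fun k => ∫⁻ c, F k (a, b, c) ∂μ) atTop ∂μ ∂μ :=
        lintegral_mono fun a => lintegral_mono fun b =>
          lintegral_liminf_le fun k => (hF k).comp (by fun_prop)
    _ ≤ ∫⁻ a, liminf (fun k => ∫⁻ b, ∫⁻ c, F k (a, b, c) ∂μ ∂μ) atTop ∂μ :=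
        lintegral_mono fun a =>
          lintegral_liminf_le fun k => (hmeas_inner k).comp measurable_prodMk_left
    _ ≤ liminf (fun k => ∫⁻ a, ∫⁻ b, ∫⁻ c, F k (a, b, c) ∂μ ∂μ ∂μ) atTop :=
        lintegral_liminf_le fun k => (hmeas_inner k).lintegral_prod_right'

theorem measurable_invR {n : ℕ} (p q : ℝ) :
    Measurable fun x : EuclideanSpace ℝ (Fin n) × EuclideanSpace ℝ (Fin n) ×
      EuclideanSpace ℝ (Fin n) => invR p q x.1 x.2.1 x.2.2 := by
  unfold invR wedgeNorm
  fun_prop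

theorem invR_eq_zero_of_degenerate {n : ℕ} {p : ℝ} (hp : p ≠ 0) (q : ℝ)
    {x y z : EuclideanSpace ℝ (Fin n)} (h : ‖y - z‖ * ‖y - x‖ * ‖z - x‖ = 0) :
    invR p q x y z = 0 := by
  rw [invR, h, Real.zero_rpow hp, div_zero]

theorem tendsto_invR {ι : Type*} {l : Filter ι} {n : ℕ} (p : ℝ) {q : ℝ} (hq : 0 ≤ q)
    {x y z : EuclideanSpace ℝ (Fin n)} {X Y Z : ι → EuclideanSpace ℝ (Fin n)}
    (hX : Tendsto X l (𝓝 x)) (hY : Tendsto Y l (𝓝 y)) (hZ : Tendsto Z l (𝓝 z))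
    (h : ‖y - z‖ * ‖y - x‖ * ‖z - x‖ ≠ 0) :
    Tendsto (fun k => invR p q (X k) (Y k) (Z k)) l (𝓝 (invR p q x y z)) := by
  have hw : Tendsto (fun k => wedgeNorm (Y k - X k) (Z k - X k)) l
      (𝓝 (wedgeNorm (y - x) (z - x))) := by
    have ha := hY.sub hX
    have hb := hZ.sub hX
    exact (((ha.norm.pow 2).mul (hb.norm.pow 2)).sub ((ha.inner hb).pow 2)).sqrt
  have hd : Tendsto (fun k => ‖Y k - Z k‖ * ‖Y k - X k‖ * ‖Z k - X k‖) l
      (𝓝 (‖y - z‖ * ‖y - x‖ * ‖z - x‖)) :=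
    ((hY.sub hZ).norm.mul (hY.sub hX).norm).mul (hZ.sub hX).norm
  refine (hw.rpow_const (Or.inr hq)).div (hd.rpow_const (Or.inl h)) ?_
  exact (Real.rpow_pos_of_pos (lt_of_le_of_ne (by positivity) h.symm) p).ne'

/-- **Lower semi-continuity of `E_{p,q}` along `C¹`-convergent sequences of
injective regular curves.** -/
theorem menger_lower_semicontinuous (n : ℕ) (p q : ℝ)
    (hp0 : 0 < p) (hq0 : 0 < q)
    (γseq : ℕ → ℝ → EuclideanSpace ℝ (Fin n))
    (γ : ℝ → EuclideanSpace ℝ (Fin n))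
    (hC1 : ∀ k, ContDiff ℝ 1 (γseq k)) (hC1' : ContDiff ℝ 1 γ)
    (hper : ∀ k, Function.Periodic (γseq k) 1) (hper' : Function.Periodic γ 1)
    (hinj : ∀ k, InjCircle (γseq k)) (hinj' : InjCircle γ)
    (hreg : ∀ k, ∃ c : ℝ, 0 < c ∧ ∀ u, c ≤ ‖deriv (γseq k) u‖)
    (hreg' : ∃ c : ℝ, 0 < c ∧ ∀ u, c ≤ ‖deriv γ u‖)
    (hconv : ∀ ε : ℝ, 0 < ε → ∃ N : ℕ, ∀ k ≥ N, ∀ u : ℝ,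
      ‖γseq k u - γ u‖ + ‖deriv (γseq k) u - deriv γ u‖ ≤ ε) :
    menger p q γ (deriv γ) ≤
      Filter.liminf (fun k => menger p q (γseq k) (deriv (γseq k))) atTop := by
  have hsum (u : ℝ) : Tendsto
      (fun k => ‖γseq k u - γ u‖ + ‖deriv (γseq k) u - deriv γ u‖) atTop (𝓝 0) := by
    refine Metric.nhds_basis_closedBall.tendsto_right_iff.2 fun ε hε => ?_
    filter_upwards [eventually_atTop.2 (hconv ε hε)] with k hk
    rw [mem_closedBall_zero_iff, Real.norm_of_nonneg (by positivity)]
    exact hk u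
  have hγ (u : ℝ) : Tendsto (fun k => γseq k u) atTop (𝓝 (γ u)) :=
    tendsto_iff_norm_sub_tendsto_zero.2 <| squeeze_zero (fun _ => norm_nonneg _)
      (fun _ => le_add_of_nonneg_right (norm_nonneg _)) (hsum u)
  have hγ' (u : ℝ) : Tendsto (fun k => deriv (γseq k) u) atTop (𝓝 (deriv γ u)) :=
    tendsto_iff_norm_sub_tendsto_zero.2 <| squeeze_zero (fun _ => norm_nonneg _)
      (fun _ => le_add_of_nonneg_left (norm_nonneg _)) (hsum u)
  refine lintegral_lintegral_lintegral_le_liminf (volume.restrict (Ico (0 : ℝ) 1))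
    (fun k u => ENNReal.ofReal (‖deriv (γseq k) u.1‖ * ‖deriv (γseq k) u.2.1‖ *
      ‖deriv (γseq k) u.2.2‖ * invR p q (γseq k u.1) (γseq k u.2.1) (γseq k u.2.2)))
    (fun u => ENNReal.ofReal (‖deriv γ u.1‖ * ‖deriv γ u.2.1‖ * ‖deriv γ u.2.2‖ *
      invR p q (γ u.1) (γ u.2.1) (γ u.2.2))) (fun k => ?_) ?_
  · have hm : Measurable (γseq k) := (hC1 k).continuous.measurable
    have hR : Measurable fun u : ℝ × ℝ × ℝ =>
        invR p q (γseq k u.1) (γseq k u.2.1) (γseq k u.2.2) :=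
      (measurable_invR p q).comp (f := fun u : ℝ × ℝ × ℝ =>
        (γseq k u.1, γseq k u.2.1, γseq k u.2.2)) (by fun_prop)
    have hd : Measurable (deriv (γseq k)) := measurable_deriv _
    fun_prop
  · rintro ⟨a, b, c⟩
    by_cases h : ‖γ b - γ c‖ * ‖γ b - γ a‖ * ‖γ c - γ a‖ = 0
    · simp [invR_eq_zero_of_degenerate hp0.ne' q h]
    · exact (ENNReal.tendsto_ofReal ((((hγ' a).norm.mul (hγ' b).norm).mul (hγ' c).norm).mul
        (tendsto_invR p hq0.le (hγ a) (hγ b) (hγ c) h))).liminf_eq.ge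
end
end
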